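/- Let R be a local hypersurface, M and N finitely generated R-modules with M or N of rank, and suppose M ⊗_R N is maximal Cohen-Macaulay. Then both M and N are maximal Cohen-Macaulay, and at least one of M, N is free. -/

import Mathlib

open RingTheory.Sequence CategoryTheory

universe u

noncomputable section

/-- Depth of a module: supremum of lengths of weakly regular sequences consisting of nonunits.
For a f.g. module over a noetherian local ring this is the usual depth, and the zero module
has depth `⊤`. -/
def rdepth (A : Type u) [CommRing A] (M : Type u) [AddCommGroup M] [Module A M] : ℕ∞ :=
  sSup {n : ℕ∞ | ∃ rs : List A, (rs.length : ℕ∞) = n ∧ (∀ r ∈ rs, r ∈ nonunits A) ∧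
    RingTheory.Sequence.IsWeaklyRegular M rs}

/-- Serre's condition `(S_n)`. -/
def SerreCond (R : Type u) [CommRing R] (M : Type u) [AddCommGroup M] [Module R M] (n : ℕ) :
    Prop :=
  ∀ (p : Ideal R) (hp : p.IsPrime), Nontrivial (LocalizedModule p.primeCompl M) →
    min (n : ℕ∞) (Order.height (⟨p, hp⟩ : PrimeSpectrum R)) ≤
      rdepth (Localization.AtPrime p) (LocalizedModule p.primeCompl M)

/-- `Tor_i^R(M, N)` as an object of `ModuleCat R`. -/
def TorModCat (R : Type u) [CommRing R] (i : ℕ) (M N : Type u) [AddCommGroup M] [Module R M]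
    [AddCommGroup N] [Module R N] : ModuleCat.{u} R :=
  ((Tor (ModuleCat.{u} R) i).obj (ModuleCat.of R M)).obj (ModuleCat.of R N)

/-- `Tor_i^R(M, N)` as a type (with its `R`-module structure given by instances below). -/
def TorM (R : Type u) [CommRing R] (i : ℕ) (M N : Type u) [AddCommGroup M] [Module R M]
    [AddCommGroup N] [Module R N] : Type u :=
  TorModCat R i M N

instance (R : Type u) [CommRing R] (i : ℕ) (M N : Type u) [AddCommGroup M] [Module R M]
    [AddCommGroup N] [Module R N] : AddCommGroup (TorM R i M N) :=
  inferInstanceAs (AddCommGroup (TorModCat R i M N))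

instance (R : Type u) [CommRing R] (i : ℕ) (M N : Type u) [AddCommGroup M] [Module R M]
    [AddCommGroup N] [Module R N] : Module R (TorM R i M N) :=
  inferInstanceAs (Module R (TorModCat R i M N))

/-- A regular local ring: noetherian local, whose maximal ideal is generated by a
(weakly) regular sequence. -/
def IsRegLocal (Q : Type u) [CommRing Q] : Prop :=
  IsNoetherianRing Q ∧ IsLocalRing Q ∧
    ∃ rs : List Q, RingTheory.Sequence.IsWeaklyRegular Q rs ∧ (∀ r ∈ rs, r ∈ nonunits Q) ∧
      Ideal.span {x | x ∈ rs} = Ideal.span (nonunits Q)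

/-- A (local) complete intersection: noetherian local ring whose completion is a regular
local ring modulo a regular sequence (of nonunits). -/
def IsCIRing (R : Type u) [CommRing R] : Prop :=
  IsNoetherianRing R ∧ IsLocalRing R ∧
    ∃ (Q : Type u) (_ : CommRing Q), IsRegLocal Q ∧
      ∃ rs : List Q, (∀ r ∈ rs, r ∈ nonunits Q) ∧ RingTheory.Sequence.IsWeaklyRegular Q rs ∧
        Nonempty ((Q ⧸ Ideal.span {x | x ∈ rs}) ≃+* AdicCompletion (Ideal.span (nonunits R)) R)

/-- A hypersurface: noetherian local ring whose completion is a regular local ring modulo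
a single non-zerodivisor in the maximal ideal. -/
def IsHypersurfaceRing (R : Type u) [CommRing R] : Prop :=
  IsNoetherianRing R ∧ IsLocalRing R ∧
    ∃ (Q : Type u) (_ : CommRing Q), IsRegLocal Q ∧
      ∃ f : Q, f ∈ nonunits Q ∧ f ∈ nonZeroDivisors Q ∧
        Nonempty ((Q ⧸ Ideal.span {f}) ≃+* AdicCompletion (Ideal.span (nonunits R)) R)

/-- Maximal Cohen-Macaulay module over a local ring: depth equals the Krull dimension. -/
def IsMCM (R : Type u) [CommRing R] (M : Type u) [AddCommGroup M] [Module R M] : Prop :=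
  (rdepth R M : WithBot ℕ∞) = ringKrullDim R

/-- Cohen-Macaulay local ring. -/
def IsCMLocalRing (A : Type u) [CommRing A] : Prop :=
  IsNoetherianRing A ∧ IsLocalRing A ∧ (rdepth A A : WithBot ℕ∞) = ringKrullDim A

/-- `M` has (constant) rank: free of the same rank at every minimal prime. -/
def HasRank (R : Type u) [CommRing R] (M : Type u) [AddCommGroup M] [Module R M] : Prop :=
  ∃ r : ℕ, ∀ (p : Ideal R) (hp : p.IsPrime), p ∈ minimalPrimes R →
    Nonempty ((LocalizedModule (@Ideal.primeCompl R _ p hp) M)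
      ≃ₗ[Localization (@Ideal.primeCompl R _ p hp)]
      (Fin r → Localization (@Ideal.primeCompl R _ p hp)))

/-- Projective dimension at most `n`. -/
def pdLE (R : Type u) [CommRing R] : ℕ → ∀ (M : Type u) [AddCommGroup M] [Module R M], Prop
  | 0, M, _, _ => Module.Projective R M
  | n+1, M, _, _ => ∃ (P : Type u) (_ : AddCommGroup P) (_ : Module R P),
      Module.Projective R P ∧ ∃ f : P →ₗ[R] M, Function.Surjective f ∧
        pdLE R n (LinearMap.ker f)

/-- Injective dimension at most `n`. -/
def idLE (R : Type u) [CommRing R] : ℕ → ∀ (M : Type u) [AddCommGroup M] [Module R M], Prop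
  | 0, M, _, _ => Module.Injective R M
  | n+1, M, _, _ => ∃ (I : Type u) (_ : AddCommGroup I) (_ : Module R I),
      Module.Injective R I ∧ ∃ f : M →ₗ[R] I, Function.Injective f ∧
        idLE R n (I ⧸ LinearMap.range f)

/-- Gorenstein local ring: noetherian local with finite self-injective dimension. -/
def IsGorensteinLocalRing (R : Type u) [CommRing R] : Prop :=
  IsNoetherianRing R ∧ IsLocalRing R ∧ ∃ n : ℕ, idLE R n R

/-- The map `M → R^ν` obtained from a free cover `ε : R^ν ↠ M^*` by dualizing and composing
with the biduality map; its cokernel is the pushforward `M₁`. -/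
def pushMap (R M : Type u) [CommRing R] [AddCommGroup M] [Module R M] {ν : ℕ}
    (ε : (Fin ν → R) →ₗ[R] Module.Dual R M) : M →ₗ[R] (Fin ν → R) where
  toFun m := fun i => ε (Pi.single i 1) m
  map_add' x y := by funext i; simp
  map_smul' r x := by funext i; simp

/-- Length of a module, as the Krull dimension of its lattice of submodules. -/
def mlen (R : Type u) [CommRing R] (M : Type u) [AddCommGroup M] [Module R M] :
    WithBot ℕ∞ :=
  Order.krullDim (Submodule R M)

/-- An unramified regular local ring: equicharacteristic (contains a field), or of mixed
characteristic `(0, p)` with `p` not in the square of the maximal ideal. -/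
def IsUnramifiedRegLocal (Q : Type u) [CommRing Q] : Prop :=
  IsRegLocal Q ∧
    ((∃ (K : Type u) (_ : Field K), Nonempty (K →+* Q)) ∨
     (CharZero Q ∧ ∃ p : ℕ, p.Prime ∧ (p : Q) ∈ nonunits Q ∧
        (p : Q) ∉ (Ideal.span (nonunits Q)) ^ 2))

section helpers
set_option linter.style.haveILetI false
open IsLocalRing
open scoped Pointwise

theorem maxIdeal_comap_of_surj {A B : Type u} [CommRing A] [CommRing B] [IsLocalRing A]
    [IsLocalRing B] (φ : A →+* B) (hφ : Function.Surjective φ) :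
    (maximalIdeal B).comap φ = maximalIdeal A :=
  haveI := Ideal.comap_isMaximal_of_surjective φ hφ (K := maximalIdeal B)
  IsLocalRing.eq_maximalIdeal this

theorem maxIdeal_map_of_surj {A B : Type u} [CommRing A] [CommRing B] [IsLocalRing A]
    [IsLocalRing B] (φ : A →+* B) (hφ : Function.Surjective φ) :
    (maximalIdeal A).map φ = maximalIdeal B := by
  rw [← maxIdeal_comap_of_surj φ hφ, Ideal.map_comap_of_surjective φ hφ]

/-- Regular local ring of dimension `n`. -/
structure RegN (n : ℕ) (Q : Type u) [CommRing Q] : Prop where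
  noeth : IsNoetherianRing Q
  loc : IsLocalRing Q
  gen : ∃ s : Finset Q, s.card ≤ n ∧ Ideal.span (s : Set Q) = maximalIdeal Q
  dim : ringKrullDim Q = n

theorem RegN.of_isRegLocal {Q : Type u} [CommRing Q] (h : IsRegLocal Q) : ∃ n, RegN n Q := by
  classical
  obtain ⟨hN, hL, rs, hreg, hmem, hspan⟩ := h
  have hmax : Ideal.span (nonunits Q) = maximalIdeal Q := by
    apply le_antisymm
    · rw [Ideal.span_le]; intro x hx; exact (mem_maximalIdeal x).2 hx
    · intro x hx; exact Ideal.subset_span ((mem_maximalIdeal x).1 hx)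
  have hof : Ideal.ofList rs = maximalIdeal Q := by rw [← hmax, ← hspan]
  have hR : IsRegular Q rs :=
    (IsLocalRing.isRegular_iff_isWeaklyRegular_of_subset_maximalIdeal
      (fun r hr => (mem_maximalIdeal r).2 (hmem r hr))).2 hreg
  have hd := ringKrullDim_add_length_eq_ringKrullDim_of_isRegular rs hR
  have h0 : ringKrullDim (Q ⧸ Ideal.ofList rs) = 0 := by
    rw [hof]
    exact ringKrullDim_eq_zero_of_field (ResidueField Q)
  refine ⟨rs.length, hN, hL, ⟨rs.toFinset, List.toFinset_card_le rs, ?_⟩, ?_⟩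
  · rw [← hof]; simp [Ideal.ofList]
  · rw [← hd, h0, zero_add]

theorem exists_notMem_of_finite {R : Type u} [CommRing R] (I J : Ideal R) (S : Set (Ideal R))
    (hS : S.Finite) (hp : ∀ p ∈ S, p.IsPrime) (hn : ∀ p ∈ S, ¬ I ≤ p) (hJ : ¬ I ≤ J) :
    ∃ x ∈ I, x ∉ J ∧ ∀ p ∈ S, x ∉ p := by
  by_contra hcon
  push Not at hcon
  have := (Ideal.subset_union_prime_finite (hS.insert J) (f := id) J J (I := I) (by
    intro i hi h1 _
    rcases hi with rfl | hi
    · exact absurd rfl h1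
    · exact hp i hi)).1 (by
    intro x hx
    by_cases hxJ : x ∈ J
    · exact Set.mem_biUnion (Set.mem_insert _ _) hxJ
    · obtain ⟨p, hp, hxp⟩ := hcon x hx hxJ
      exact Set.mem_biUnion (Set.mem_insert_of_mem _ hp) hxp)
  obtain ⟨p, hp, hle⟩ := this
  rcases hp with rfl | hp
  · exact hJ hle
  · exact hn p hp hle

theorem RegN.not_le_sq {n : ℕ} {Q : Type u} [CommRing Q] (h : RegN (n+1) Q) :
    haveI := h.loc; ¬ maximalIdeal Q ≤ maximalIdeal Q ^ 2 := by
  haveI := h.loc; haveI := h.noeth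
  intro hle
  have hb : maximalIdeal Q = ⊥ :=
    Submodule.eq_bot_of_le_smul_of_le_jacobson_bot (maximalIdeal Q) (maximalIdeal Q)
      (IsNoetherian.noetherian _) (by rw [pow_two] at hle; exact hle)
      (IsLocalRing.maximalIdeal_le_jacobson _)
  have hf : IsField Q := IsLocalRing.isField_iff_maximalIdeal_eq.2 hb
  have := ringKrullDim_eq_zero_of_isField hf
  rw [h.dim] at this
  norm_cast at this

open scoped Pointwise in
theorem RegN.quot {n : ℕ} {Q : Type u} [CommRing Q] (h : RegN (n+1) Q) (x : Q)
    (hx : haveI := h.loc; x ∈ maximalIdeal Q) (hx2 : haveI := h.loc; x ∉ maximalIdeal Q ^ 2) :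
    RegN n (Q ⧸ Ideal.span {x}) := by
  classical
  haveI := h.loc; haveI := h.noeth
  obtain ⟨s, hc, hs⟩ := h.gen
  have hne : Ideal.span {x} ≠ ⊤ := fun ht => by
    rw [Ideal.span_singleton_eq_top] at ht
    exact (mem_maximalIdeal x).1 hx ht
  haveI : Nontrivial (Q ⧸ Ideal.span {x}) := Ideal.Quotient.nontrivial_iff.2 hne
  haveI hloc : IsLocalRing (Q ⧸ Ideal.span {x}) :=
    IsLocalRing.of_surjective' _ Ideal.Quotient.mk_surjective
  obtain ⟨a, _, ha⟩ := (Submodule.mem_span_finset (R := Q) (s := s) (x := x)).1 (by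
    have := hx; rw [← hs] at this; exact this)
  have : ∃ i ∈ s, IsUnit (a i) := by
    by_contra hcon
    push Not at hcon
    apply hx2
    rw [← ha]
    refine Ideal.sum_mem _ fun i hi => ?_
    rw [pow_two, smul_eq_mul]
    refine Ideal.mul_mem_mul ((mem_maximalIdeal _).2 (hcon i hi)) ?_
    rw [← hs]; exact Ideal.subset_span hi
  obtain ⟨i, hi, hu⟩ := this
  have hmax : maximalIdeal (Q ⧸ Ideal.span {x}) =
      (maximalIdeal Q).map (Ideal.Quotient.mk (Ideal.span {x})) :=
    (maxIdeal_map_of_surj _ Ideal.Quotient.mk_surjective).symm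
  have hgen : Ideal.span (((s.erase i).image (Ideal.Quotient.mk (Ideal.span {x})) : Finset _) :
      Set (Q ⧸ Ideal.span {x})) = maximalIdeal (Q ⧸ Ideal.span {x}) := by
    rw [hmax, ← hs, Ideal.map_span]
    apply le_antisymm
    · apply Ideal.span_mono
      rw [Finset.coe_image]
      exact Set.image_mono (Finset.coe_subset.2 (Finset.erase_subset _ _))
    · rw [Ideal.span_le]
      rintro _ ⟨j, hj, rfl⟩
      by_cases hji : j = i
      · subst hji
        have h0 : Ideal.Quotient.mk (Ideal.span {x}) x = 0 :=
          Ideal.Quotient.eq_zero_iff_mem.2 (Ideal.subset_span rfl)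
        have h1 : Ideal.Quotient.mk (Ideal.span {x}) (a j) * Ideal.Quotient.mk _ j +
          ∑ k ∈ s.erase j, Ideal.Quotient.mk (Ideal.span {x}) (a k) * Ideal.Quotient.mk _ k = 0 := by
          have h3 := congrArg (Ideal.Quotient.mk (Ideal.span {x})) ha
          rw [← Finset.add_sum_erase s _ hj, h0, map_add, map_sum] at h3
          simpa using h3
        have h2 : Ideal.Quotient.mk (Ideal.span {x}) (a j) * Ideal.Quotient.mk _ j ∈
            Ideal.span (((s.erase j).image (Ideal.Quotient.mk (Ideal.span {x})) : Finset _) :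
      Set (Q ⧸ Ideal.span {x})) := by
          rw [eq_neg_of_add_eq_zero_left h1]
          refine neg_mem (Ideal.sum_mem _ fun k hk => Ideal.mul_mem_left _ _ (Ideal.subset_span ?_))
          exact Finset.mem_coe.2 (Finset.mem_image_of_mem _ hk)
        exact (Ideal.unit_mul_mem_iff_mem _ (hu.map _)).1 h2
      · apply Ideal.subset_span
        exact Finset.mem_coe.2 (Finset.mem_image_of_mem _ (Finset.mem_erase.2 ⟨hji, hj⟩))
  have hcard : ((s.erase i).image (Ideal.Quotient.mk (Ideal.span {x}))).card ≤ n := by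
    refine Finset.card_image_le.trans ?_
    rw [Finset.card_erase_of_mem hi]; omega
  refine ⟨inferInstance, hloc, ⟨_, hcard, hgen⟩, ?_⟩
  apply le_antisymm
  · refine (ringKrullDim_le_spanFinrank_maximalIdeal _).trans ?_
    rw [← hgen]
    have := Submodule.spanFinrank_span_le_ncard_of_finite (R := Q ⧸ Ideal.span {x})
      (Finset.finite_toSet ((s.erase i).image (Ideal.Quotient.mk (Ideal.span {x}))))
    rw [Set.ncard_coe_finset] at this
    exact_mod_cast this.trans hcard
  · have := ringKrullDim_le_ringKrullDim_quotSMulTop_succ hx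
    have he : x • (⊤ : Ideal Q) = Ideal.span {x} := by
      rw [← Submodule.ideal_span_singleton_smul]; simp
    rw [he, h.dim] at this
    have h2 : ((n + 1 : ℕ) : WithBot ℕ∞) = (n : WithBot ℕ∞) + 1 := by push_cast; rfl
    rw [h2] at this
    exact ENat.WithBot.add_le_add_one_right_iff.1 this

theorem RegN.isDomain : ∀ {n : ℕ} {Q : Type u} [CommRing Q] (_ : RegN n Q), IsDomain Q := by
  intro n
  induction n with
  | zero =>
    intro Q _ h
    haveI := h.loc; haveI := h.noeth
    obtain ⟨s, hc, hs⟩ := h.gen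
    have : s = ∅ := by simpa using hc
    subst this
    have hb : maximalIdeal Q = ⊥ := by rw [← hs]; simp
    exact (IsLocalRing.isField_iff_maximalIdeal_eq.2 hb).isDomain
  | succ n ih =>
    intro Q _ h
    haveI := h.loc; haveI := h.noeth
    have hfin := minimalPrimes.finite_of_isNoetherianRing Q
    have hnle : ∀ p ∈ minimalPrimes Q, ¬ maximalIdeal Q ≤ p := by
      intro p hp hle
      have := hp.1.1
      have hpm : p = maximalIdeal Q := (IsLocalRing.eq_maximalIdeal
        ((maximalIdeal.isMaximal Q).eq_of_le this.ne_top hle ▸ maximalIdeal.isMaximal Q))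
      have h1 := IsLocalRing.maximalIdeal_height_eq_ringKrullDim (R := Q)
      have h2 : p.height = 0 := by
        exact Ideal.height_eq_zero_iff.2 hp
      rw [← hpm, h2, h.dim] at h1
      norm_cast at h1
    obtain ⟨x, hx, hx2, hxp⟩ := exists_notMem_of_finite (maximalIdeal Q) (maximalIdeal Q ^ 2)
      (minimalPrimes Q) hfin (fun p hp => hp.1.1) hnle h.not_le_sq
    haveI := ih (h.quot x hx hx2)
    have hprime : (Ideal.span {x}).IsPrime := (Ideal.Quotient.isDomain_iff_prime _).1 this
    obtain ⟨p, hp, hle⟩ := Ideal.exists_minimalPrimes_le (I := ⊥) (J := Ideal.span {x}) bot_le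
    have hpP := hp.1.1
    have hb : p = ⊥ := by
      refine Submodule.eq_bot_of_le_smul_of_le_jacobson_bot (maximalIdeal Q) p
        (IsNoetherian.noetherian _) ?_ (IsLocalRing.maximalIdeal_le_jacobson _)
      intro y hy
      obtain ⟨a, rfl⟩ := Ideal.mem_span_singleton.1 (hle hy)
      have ha : a ∈ p := (hpP.mem_or_mem hy).resolve_left (hxp p hp)
      exact Ideal.mul_mem_mul hx ha
    subst hb
    exact (IsDomain.of_bot_isPrime Q)

theorem RegN.isPID {Q : Type u} [CommRing Q] (h : RegN 1 Q) : IsPrincipalIdealRing Q := by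
  haveI := h.loc; haveI := h.noeth; haveI := h.isDomain
  obtain ⟨s, hc, hs⟩ := h.gen
  have hp : (maximalIdeal Q).IsPrincipal := by
    rcases Finset.card_le_one_iff_subset_singleton.1 hc with ⟨x, hx⟩
    rcases Finset.subset_singleton_iff.1 hx with rfl | rfl
    · exact ⟨⟨0, by rw [← hs]; simp⟩⟩
    · exact ⟨⟨x, by rw [← hs]; simp⟩⟩
  have hnf : ¬ IsField Q := fun hf => by
    have := ringKrullDim_eq_zero_of_isField hf
    rw [h.dim] at this
    norm_cast at this
  exact ((tfae_of_isNoetherianRing_of_isLocalRing_of_isDomain Q).out 0 4).2 hp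

theorem RegN.not_isField {n : ℕ} {Q : Type u} [CommRing Q] (h : RegN (n+1) Q) : ¬ IsField Q := by
  intro hf
  have := ringKrullDim_eq_zero_of_isField hf
  rw [h.dim] at this
  norm_cast at this

/-- The maximal ideal is not associated to `M`. -/
def Nt (R : Type u) [CommRing R] [IsLocalRing R] (M : Type u) [AddCommGroup M] [Module R M] :
    Prop :=
  ∀ v : M, (∀ a ∈ maximalIdeal R, a • v = 0) → v = 0

/-- Depth at least `n`. -/
def Dp (R : Type u) [CommRing R] [IsLocalRing R] :
    ℕ → ∀ (M : Type u) [AddCommGroup M] [Module R M], Prop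
  | 0, _, _, _ => True
  | n+1, M, _, _ => ∃ x ∈ maximalIdeal R, IsSMulRegular M x ∧ Dp R n (QuotSMulTop x M)

theorem qst_mk_eq_zero {R M : Type u} [CommRing R] [AddCommGroup M] [Module R M] (x : R) (u : M) :
    (Submodule.Quotient.mk u : QuotSMulTop x M) = 0 ↔ ∃ w, u = x • w := by
  rw [Submodule.Quotient.mk_eq_zero, Submodule.mem_smul_pointwise_iff_exists]
  constructor
  · rintro ⟨b, _, rfl⟩; exact ⟨b, rfl⟩
  · rintro ⟨b, rfl⟩; exact ⟨b, trivial, rfl⟩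

theorem reg_iff {R M : Type u} [CommRing R] [AddCommGroup M] [Module R M] (x : R) :
    IsSMulRegular M x ↔ ∀ v : M, x • v = 0 → v = 0 :=
  ⟨fun h v hv => h (by simpa using hv), fun h a b hab => sub_eq_zero.1 (h _ (by
    simpa [smul_sub, sub_eq_zero] using hab))⟩

/-- `z` is regular on `M/y` iff ... -/
theorem reg_qst_iff {R M : Type u} [CommRing R] [AddCommGroup M] [Module R M] (y z : R) :
    IsSMulRegular (QuotSMulTop y M) z ↔ ∀ u v : M, z • u = y • v → ∃ w, u = y • w := by
  rw [reg_iff]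
  constructor
  · intro h u v huv
    rw [← qst_mk_eq_zero]
    apply h
    rw [← Submodule.Quotient.mk_smul, qst_mk_eq_zero]
    exact ⟨v, huv⟩
  · intro h v
    obtain ⟨u, rfl⟩ := Submodule.Quotient.mk_surjective _ v
    intro hv
    rw [← Submodule.Quotient.mk_smul, qst_mk_eq_zero] at hv
    obtain ⟨w, hw⟩ := hv
    rw [qst_mk_eq_zero]
    exact h _ _ hw

theorem Dp.nt {R M : Type u} [CommRing R] [IsLocalRing R] [AddCommGroup M] [Module R M] {n : ℕ}
    (h : Dp R (n+1) M) : Nt R M := by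
  obtain ⟨x, hx, hr, _⟩ := h
  intro v hv
  exact (reg_iff x).1 hr v (hv x hx)

theorem Nt.not_le {R M : Type u} [CommRing R] [IsLocalRing R] [IsNoetherianRing R]
    [AddCommGroup M] [Module R M]
    (h : Nt R M) : ∀ p ∈ associatedPrimes R M, ¬ maximalIdeal R ≤ p := by
  intro p hp hle
  obtain ⟨hpr, v, hv⟩ := isAssociatedPrime_iff.1 hp
  have hv0 : v = 0 := by
    apply h
    intro a ha
    have := hle ha
    rw [hv] at this
    simpa [Submodule.mem_colon_singleton] using this
  apply hpr.ne_top
  rw [hv, hv0, Ideal.eq_top_iff_one]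
  simp [Submodule.mem_colon_singleton]

theorem reg_of_notMem {R M : Type u} [CommRing R] [IsNoetherianRing R]
    [AddCommGroup M] [Module R M] (z : R) (h : ∀ p ∈ associatedPrimes R M, z ∉ p) :
    IsSMulRegular M z := by
  rw [reg_iff]
  intro v hv
  by_contra hne
  have : z ∈ ⋃ p ∈ associatedPrimes R M, (p : Set R) := by
    rw [biUnion_associatedPrimes_eq_zero_divisors]
    exact ⟨v, hne, hv⟩
  obtain ⟨p, hp, hz⟩ := Set.mem_iUnion₂.1 this
  exact h p hp hz

noncomputable def qstComm (R M : Type u) [CommRing R] [AddCommGroup M] [Module R M] (y z : R) :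
    QuotSMulTop z (QuotSMulTop y M) ≃ₗ[R] QuotSMulTop y (QuotSMulTop z M) :=
  QuotSMulTop.equivQuotTensor z (QuotSMulTop y M) ≪≫ₗ
    QuotSMulTop.tensorQuotSMulTopEquivQuotSMulTop y (R ⧸ Ideal.span {z}) M ≪≫ₗ
    QuotSMulTop.congr y (QuotSMulTop.equivQuotTensor z M).symm

theorem Dp.congr_semi {R S : Type u} [CommRing R] [IsLocalRing R] [CommRing S] [IsLocalRing S]
    (σ : R →+* S) (hσ : Function.Surjective σ) : ∀ (n : ℕ) (M N : Type u) [AddCommGroup M]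
    [Module R M] [AddCommGroup N] [Module S N] (e : M ≃+ N) (_ : ∀ (r : R) m, e (r • m) = σ r • e m),
    Dp R n M ↔ Dp S n N := by
  intro n
  induction n with
  | zero => intros; exact Iff.rfl
  | succ n ih =>
    intro M N _ _ _ _ e he
    have key : ∀ x : R, (IsSMulRegular M x ∧ Dp R n (QuotSMulTop x M)) ↔
        (IsSMulRegular N (σ x) ∧ Dp S n (QuotSMulTop (σ x) N)) := by
      intro x
      have h1 : IsSMulRegular M x ↔ IsSMulRegular N (σ x) := by
        rw [reg_iff, reg_iff]
        constructor
        · intro h v hv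
          obtain ⟨w, rfl⟩ := e.surjective v
          rw [← he] at hv
          rw [h w (by simpa using hv), map_zero]
        · intro h v hv
          have := h (e v) (by rw [← he, hv, map_zero])
          simpa using this
      let e' : (QuotSMulTop x M) ≃+ (QuotSMulTop (σ x) N) :=
        QuotientAddGroup.congr (x • (⊤ : Submodule R M)).toAddSubgroup
          (σ x • (⊤ : Submodule S N)).toAddSubgroup e (by
            ext v
            simp only [AddSubgroup.mem_map, Submodule.mem_toAddSubgroup,
              Submodule.mem_smul_pointwise_iff_exists]
            constructor
            · rintro ⟨_, ⟨w, _, rfl⟩, rfl⟩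
              exact ⟨e w, trivial, (he _ _).symm⟩
            · rintro ⟨w, _, rfl⟩
              obtain ⟨w, rfl⟩ := e.surjective w
              exact ⟨_, ⟨w, trivial, rfl⟩, he _ _⟩)
      have h2 := ih (QuotSMulTop x M) (QuotSMulTop (σ x) N) e' (by
        intro r m
        obtain ⟨m, rfl⟩ := Submodule.Quotient.mk_surjective _ m
        change (Submodule.Quotient.mk (e (r • m)) : QuotSMulTop (σ x) N) = _
        rw [he]; rfl)
      rw [h1, h2]
    have hm := maxIdeal_comap_of_surj σ hσ
    constructor
    · rintro ⟨x, hx, h⟩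
      refine ⟨σ x, ?_, (key x).1 h⟩
      rw [← hm] at hx; exact hx
    · rintro ⟨x, hx, h⟩
      obtain ⟨x, rfl⟩ := hσ x
      refine ⟨x, ?_, (key x).2 h⟩
      rw [← hm]; exact hx

theorem Dp.congr {R : Type u} [CommRing R] [IsLocalRing R] {n : ℕ} {M N : Type u} [AddCommGroup M]
    [Module R M] [AddCommGroup N] [Module R N] (e : M ≃ₗ[R] N) : Dp R n M ↔ Dp R n N :=
  Dp.congr_semi (RingHom.id R) Function.surjective_id n M N e.toAddEquiv (fun r m => map_smul e r m)

theorem exists_notMem_of_finite' {R : Type u} [CommRing R] (I : Ideal R) (S : Set (Ideal R))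
    (hS : S.Finite) (hp : ∀ p ∈ S, p.IsPrime) (hn : ∀ p ∈ S, ¬ I ≤ p) :
    ∃ x ∈ I, ∀ p ∈ S, x ∉ p := by
  rcases S.eq_empty_or_nonempty with rfl | ⟨J, hJ⟩
  · exact ⟨0, I.zero_mem, by simp⟩
  · obtain ⟨x, hx, _, h⟩ := exists_notMem_of_finite I J S hS hp hn (hn J hJ)
    exact ⟨x, hx, h⟩

theorem exists_reg_avoid {R : Type u} [CommRing R] [IsLocalRing R] [IsNoetherianRing R]
    (M₁ M₂ M₃ : Type u) [AddCommGroup M₁] [Module R M₁] [AddCommGroup M₂] [Module R M₂]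
    [AddCommGroup M₃] [Module R M₃] [Module.Finite R M₁] [Module.Finite R M₂] [Module.Finite R M₃]
    (h₁ : Nt R M₁) (h₂ : Nt R M₂) (h₃ : Nt R M₃) :
    ∃ z ∈ maximalIdeal R, IsSMulRegular M₁ z ∧ IsSMulRegular M₂ z ∧ IsSMulRegular M₃ z := by
  obtain ⟨z, hz, hz'⟩ := exists_notMem_of_finite' (maximalIdeal R)
    (associatedPrimes R M₁ ∪ associatedPrimes R M₂ ∪ associatedPrimes R M₃)
    (((associatedPrimes.finite R M₁).union (associatedPrimes.finite R M₂)).union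
      (associatedPrimes.finite R M₃))
    (by rintro p ((h | h) | h) <;> exact h.isPrime)
    (by rintro p ((h | h) | h)
        exacts [h₁.not_le p h, h₂.not_le p h, h₃.not_le p h])
  exact ⟨z, hz, reg_of_notMem z fun p hp => hz' p (Or.inl (Or.inl hp)),
    reg_of_notMem z fun p hp => hz' p (Or.inl (Or.inr hp)),
    reg_of_notMem z fun p hp => hz' p (Or.inr hp)⟩

theorem reg_swap {R M : Type u} [CommRing R] [AddCommGroup M] [Module R M] {y z : R}
    (hy : IsSMulRegular M y) (h : IsSMulRegular (QuotSMulTop y M) z) :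
    IsSMulRegular (QuotSMulTop z M) y := by
  rw [reg_qst_iff] at h ⊢
  intro u v huv
  obtain ⟨w, rfl⟩ := h v u huv.symm
  refine ⟨w, hy ?_⟩
  simp only [huv, smul_smul, mul_comm]

theorem Nt.exchange {R M : Type u} [CommRing R] [IsLocalRing R] [AddCommGroup M] [Module R M]
    {x y : R} (hx : IsSMulRegular M x)
    (hy : IsSMulRegular M y) (hym : y ∈ maximalIdeal R) (h : Nt R (QuotSMulTop y M)) :
    Nt R (QuotSMulTop x M) := by
  intro u hu
  obtain ⟨u, rfl⟩ := Submodule.Quotient.mk_surjective _ u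
  have hu' : ∀ a ∈ maximalIdeal R, ∃ w, a • u = x • w := by
    intro a ha
    rw [← qst_mk_eq_zero]
    exact hu a ha
  obtain ⟨v, hv⟩ := hu' y hym
  have : (Submodule.Quotient.mk v : QuotSMulTop y M) = 0 := by
    apply h
    intro a ha
    obtain ⟨w, hw⟩ := hu' a ha
    rw [← Submodule.Quotient.mk_smul, qst_mk_eq_zero]
    refine ⟨w, hx ?_⟩
    change x • a • v = x • y • w
    rw [smul_comm x a, ← hv, smul_comm a y, hw, smul_comm]
  obtain ⟨w, rfl⟩ := (qst_mk_eq_zero _ _).1 this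
  rw [qst_mk_eq_zero]
  refine ⟨w, hy ?_⟩
  change y • u = y • x • w
  rw [hv, smul_comm]

theorem Dp.exchange {R : Type u} [CommRing R] [IsLocalRing R] [IsNoetherianRing R] : ∀ (n : ℕ)
    (M : Type u) [AddCommGroup M] [Module R M] [Module.Finite R M] (_ : Dp R (n+1) M) (x : R)
    (_ : x ∈ maximalIdeal R) (_ : IsSMulRegular M x), Dp R n (QuotSMulTop x M) := by
  intro n
  induction n with
  | zero => intros; trivial
  | succ n ih =>
    intro M _ _ _ h x hxm hx
    have hM := h.nt
    obtain ⟨y, hym, hy, hD⟩ := h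
    have hNy := hD.nt
    have hNx := hNy.exchange hx hy hym
    obtain ⟨z, hzm, hz, hzx, hzy⟩ := exists_reg_avoid _ _ _ hM hNx hNy
    refine ⟨z, hzm, hzx, ?_⟩
    have h1 := ih _ hD z hzm hzy
    have h2 : Dp R (n+1) (QuotSMulTop z M) :=
      ⟨y, hym, reg_swap hy hzy, (Dp.congr (qstComm R M y z)).1 h1⟩
    exact (Dp.congr (qstComm R M z x)).1 (ih _ h2 x hxm (reg_swap hx hzx))

theorem Dp_iff_list {R : Type u} [CommRing R] [IsLocalRing R] : ∀ (n : ℕ)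
    (M : Type u) [AddCommGroup M] [Module R M], Dp R n M ↔ ∃ rs : List R, rs.length = n ∧
      (∀ r ∈ rs, r ∈ maximalIdeal R) ∧ IsWeaklyRegular M rs := by
  intro n
  induction n with
  | zero =>
    intro M _ _
    exact ⟨fun _ => ⟨[], rfl, by simp, IsWeaklyRegular.nil R M⟩, fun _ => trivial⟩
  | succ n ih =>
    intro M _ _
    constructor
    · rintro ⟨x, hx, hr, hD⟩
      obtain ⟨rs, h1, h2, h3⟩ := (ih _).1 hD
      refine ⟨x :: rs, by simp [h1], ?_, (isWeaklyRegular_cons_iff M x rs).2 ⟨hr, h3⟩⟩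
      intro r hr
      rcases List.mem_cons.1 hr with rfl | h
      exacts [hx, h2 r h]
    · rintro ⟨rs, h1, h2, h3⟩
      cases rs with
      | nil => simp at h1
      | cons x rs =>
        obtain ⟨h4, h5⟩ := (isWeaklyRegular_cons_iff M x rs).1 h3
        exact ⟨x, h2 x (by simp), h4, (ih _).2 ⟨rs, by simpa using h1,
          fun r hr => h2 r (by simp [hr]), h5⟩⟩

/-- A presentation of `R` as a hypersurface of dimension `n`. -/
structure HypPres (n : ℕ) {Q R : Type u} [CommRing Q] [CommRing R] (φ : Q →+* R) (f : Q) :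
    Prop where
  reg : RegN (n+1) Q
  surj : Function.Surjective φ
  ker : RingHom.ker φ = Ideal.span {f}
  ne : f ≠ 0
  nonunit : ¬ IsUnit f

/-- Hypersurface rings of dimension `n`. -/
def IsHyp (n : ℕ) (R : Type u) [CommRing R] : Prop :=
  ∃ (Q : Type u) (_ : CommRing Q) (φ : Q →+* R) (f : Q), HypPres n φ f

section
variable {n : ℕ} {Q R : Type u} [CommRing Q] [CommRing R] {φ : Q →+* R} {f : Q}

theorem HypPres.noeth (h : HypPres n φ f) : IsNoetherianRing R :=
  haveI := h.reg.noeth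
  isNoetherianRing_of_surjective Q R φ h.surj

theorem HypPres.apply_eq_zero (h : HypPres n φ f) (q : Q) : φ q = 0 ↔ ∃ c, q = f * c := by
  rw [← RingHom.mem_ker, h.ker, Ideal.mem_span_singleton]; rfl

theorem HypPres.loc (h : HypPres n φ f) : IsLocalRing R := by
  haveI := h.reg.loc
  haveI : Nontrivial R := by
    refine ⟨⟨1, 0, fun h1 => ?_⟩⟩
    rw [← map_one φ, h.apply_eq_zero] at h1
    obtain ⟨c, hc⟩ := h1
    exact h.nonunit (IsUnit.of_mul_eq_one c hc.symm)
  exact IsLocalRing.of_surjective' φ h.surj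

theorem HypPres.dim (h : HypPres n φ f) : ringKrullDim R = n := by
  haveI := h.reg.loc
  haveI := h.reg.noeth
  haveI := h.reg.isDomain
  have e : (Q ⧸ Ideal.span {f}) ≃+* R :=
    (Ideal.quotEquivOfEq h.ker.symm).trans (RingHom.quotientKerEquivOfSurjective h.surj)
  have h1 := ringKrullDim_quotient_span_singleton_succ_eq_ringKrullDim
    ((reg_iff (M := Q) f).2 fun v hv => (mul_eq_zero.1 hv).resolve_left h.ne) ((mem_maximalIdeal f).2 h.nonunit)
  rw [ringKrullDim_eq_of_ringEquiv e, h.reg.dim] at h1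
  apply ENat.WithBot.add_one_cancel.1
  rw [h1]; push_cast; rfl

theorem RegN.height {Q : Type u} [CommRing Q] (h : RegN n Q) :
    haveI := h.loc; (maximalIdeal Q).height = n := by
  haveI := h.loc
  have h1 := IsLocalRing.maximalIdeal_height_eq_ringKrullDim (R := Q)
  rw [h.dim] at h1
  exact_mod_cast h1

theorem HypPres.height (h : HypPres n φ f) :
    haveI := h.loc; (maximalIdeal R).height = n := by
  haveI := h.loc
  have h1 := IsLocalRing.maximalIdeal_height_eq_ringKrullDim (R := R)
  rw [h.dim] at h1
  exact_mod_cast h1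

theorem HypPres.cut (h : HypPres (n+1) φ f) (S : Set (Ideal R)) (hS : S.Finite)
    (hp : ∀ p ∈ S, p.IsPrime) (hn : haveI := h.loc; ∀ p ∈ S, ¬ maximalIdeal R ≤ p) :
    ∃ x : Q, (haveI := h.reg.loc; x ∈ maximalIdeal Q ∧ x ∉ maximalIdeal Q ^ 2) ∧
      (haveI := h.loc; φ x ∈ maximalIdeal R) ∧ (∀ p ∈ S, φ x ∉ p) ∧ IsSMulRegular R (φ x) ∧
      ∃ ψ : Q ⧸ Ideal.span {x} →+* R ⧸ Ideal.span {φ x}, HypPres n ψ (Ideal.Quotient.mk _ f) ∧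
        ∀ q, ψ (Ideal.Quotient.mk _ q) = Ideal.Quotient.mk _ (φ q) := by
  haveI := h.reg.loc
  haveI := h.reg.noeth
  haveI := h.reg.isDomain
  haveI := h.loc
  have hcm := maxIdeal_comap_of_surj φ h.surj
  have hfin := Ideal.finite_minimalPrimes_of_isNoetherianRing Q (Ideal.span {f})
  obtain ⟨x, hx, hx2, hxp⟩ := exists_notMem_of_finite (maximalIdeal Q) (maximalIdeal Q ^ 2)
    ((Ideal.comap φ '' S) ∪ (Ideal.span {f}).minimalPrimes) ((hS.image _).union hfin)
    (by
      rintro p (⟨p, hpS, rfl⟩ | hp')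
      · haveI := hp p hpS
        exact Ideal.comap_isPrime φ p
      · exact hp'.1.1)
    (by
      rintro p (⟨p, hpS, rfl⟩ | hp') hle
      · apply hn p hpS
        rw [← maxIdeal_map_of_surj φ h.surj]
        exact Ideal.map_le_iff_le_comap.2 hle
      · have h1 := Ideal.height_le_one_of_isPrincipal_of_mem_minimalPrimes (Ideal.span {f}) p hp'
        have h2 := (Ideal.height_mono hle).trans h1
        rw [h.reg.height] at h2
        norm_cast at h2) h.reg.not_le_sq
  have hR := h.reg.quot x hx hx2
  haveI := hR.isDomain
  haveI := hR.loc
  have hprime : (Ideal.span {x}).IsPrime := (Ideal.Quotient.isDomain_iff_prime _).1 ‹_›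
  have hfx : f ∉ Ideal.span {x} := by
    intro hf
    obtain ⟨q, hq, hle⟩ := Ideal.exists_minimalPrimes_le (I := Ideal.span {f}) (J := Ideal.span {x})
      ((Ideal.span_singleton_le_iff_mem _).2 hf)
    have hqP := hq.1.1
    have hb : q = ⊥ := by
      refine Submodule.eq_bot_of_le_smul_of_le_jacobson_bot (maximalIdeal Q) q
        (IsNoetherian.noetherian _) ?_ (IsLocalRing.maximalIdeal_le_jacobson _)
      intro y hy
      obtain ⟨a, rfl⟩ := Ideal.mem_span_singleton.1 (hle hy)
      have ha : a ∈ q := (hqP.mem_or_mem hy).resolve_left (hxp q (Or.inr hq))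
      exact Ideal.mul_mem_mul hx ha
    have := hq.1.2 (Ideal.mem_span_singleton_self f)
    rw [hb] at this
    exact h.ne this
  have hφx : φ x ∈ maximalIdeal R := by rw [← hcm] at hx; exact hx
  refine ⟨x, ⟨hx, hx2⟩, hφx, fun p hpS hxp' => hxp _ (Or.inl ⟨p, hpS, rfl⟩) hxp', ?_, ?_⟩
  · rw [reg_iff]
    intro a ha
    obtain ⟨a, rfl⟩ := h.surj a
    rw [smul_eq_mul, ← map_mul, h.apply_eq_zero] at ha
    obtain ⟨b, hb⟩ := ha
    have hfb : f * b ∈ Ideal.span {x} := by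
      rw [← hb]; exact Ideal.mul_mem_right _ _ (Ideal.mem_span_singleton_self x)
    obtain ⟨c, rfl⟩ := Ideal.mem_span_singleton.1 ((hprime.mem_or_mem hfb).resolve_left hfx)
    have hx0 : x ≠ 0 := fun h0 => hx2 (by rw [h0]; exact Ideal.zero_mem _)
    rw [h.apply_eq_zero]
    refine ⟨c, mul_left_cancel₀ hx0 ?_⟩
    rw [hb]; ring
  · let ψ : Q ⧸ Ideal.span {x} →+* R ⧸ Ideal.span {φ x} := Ideal.quotientMap _ φ (by
      rw [Ideal.span_le, Set.singleton_subset_iff]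
      exact Ideal.mem_span_singleton_self (φ x))
    have hψ : ∀ q, ψ (Ideal.Quotient.mk _ q) = Ideal.Quotient.mk _ (φ q) := fun q =>
      Ideal.quotientMap_mk
    refine ⟨ψ, ⟨hR, ?_, ?_, ?_, ?_⟩, hψ⟩
    · intro r
      obtain ⟨r, rfl⟩ := Ideal.Quotient.mk_surjective r
      obtain ⟨q, rfl⟩ := h.surj r
      exact ⟨_, hψ q⟩
    · ext q
      obtain ⟨q, rfl⟩ := Ideal.Quotient.mk_surjective q
      rw [RingHom.mem_ker, hψ, Ideal.Quotient.eq_zero_iff_mem, Ideal.mem_span_singleton,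
        Ideal.mem_span_singleton]
      constructor
      · rintro ⟨c, hc⟩
        obtain ⟨c, rfl⟩ := h.surj c
        rw [← map_mul, ← sub_eq_zero, ← map_sub, h.apply_eq_zero] at hc
        obtain ⟨d, hd⟩ := hc
        refine ⟨Ideal.Quotient.mk _ d, ?_⟩
        rw [← map_mul, ← hd, map_sub, map_mul _ x,
          Ideal.Quotient.eq_zero_iff_mem.2 (Ideal.mem_span_singleton_self x)]
        simp
      · rintro ⟨c, hc⟩
        obtain ⟨c, rfl⟩ := Ideal.Quotient.mk_surjective c
        rw [← map_mul, Ideal.Quotient.eq, Ideal.mem_span_singleton] at hc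
        obtain ⟨d, hd⟩ := hc
        refine ⟨φ d, ?_⟩
        rw [← map_mul, ← hd, map_sub, map_mul, (h.apply_eq_zero f).2 ⟨1, by simp⟩]
        simp
    · rwa [Ne, Ideal.Quotient.eq_zero_iff_mem]
    · rw [← mem_nonunits_iff, ← mem_maximalIdeal,
        ← maxIdeal_map_of_surj (Ideal.Quotient.mk (Ideal.span {x})) Ideal.Quotient.mk_surjective]
      exact Ideal.mem_map_of_mem _ ((mem_maximalIdeal f).2 h.nonunit)

end

theorem IsHyp.noeth {n : ℕ} {R : Type u} [CommRing R] (h : IsHyp n R) : IsNoetherianRing R := by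
  obtain ⟨Q, _, φ, f, h⟩ := h
  exact h.noeth

theorem IsHyp.loc {n : ℕ} {R : Type u} [CommRing R] (h : IsHyp n R) : IsLocalRing R := by
  obtain ⟨Q, _, φ, f, h⟩ := h
  exact h.loc

theorem IsHyp.dim {n : ℕ} {R : Type u} [CommRing R] (h : IsHyp n R) : ringKrullDim R = n := by
  obtain ⟨Q, _, φ, f, h⟩ := h
  exact h.dim

theorem IsHyp.height {n : ℕ} {R : Type u} [CommRing R] [IsLocalRing R] (h : IsHyp n R) :
    (maximalIdeal R).height = n := by
  obtain ⟨Q, _, φ, f, h⟩ := h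
  exact h.height

theorem IsHyp.cut {n : ℕ} {R : Type u} [CommRing R] [IsLocalRing R] (h : IsHyp (n+1) R)
    (S : Set (Ideal R)) (hS : S.Finite)
    (hp : ∀ p ∈ S, p.IsPrime) (hn : ∀ p ∈ S, ¬ maximalIdeal R ≤ p) :
    ∃ x ∈ maximalIdeal R, (∀ p ∈ S, x ∉ p) ∧ IsSMulRegular R x ∧ IsHyp n (R ⧸ Ideal.span {x}) := by
  obtain ⟨Q, _, φ, f, h⟩ := h
  obtain ⟨x, _, h1, h2, h3, ψ, h4, _⟩ := h.cut S hS hp hn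
  exact ⟨φ x, h1, h2, h3, _, _, ψ, _, h4⟩

theorem qst_self_le {R : Type u} [CommRing R] (x : R) :
    x • (⊤ : Submodule R R) = Ideal.span {x} := by
  rw [← Submodule.ideal_span_singleton_smul]; simp

theorem IsHyp.dp : ∀ {n : ℕ} {R : Type u} [CommRing R] [IsLocalRing R] (_ : IsHyp n R),
    Dp R n R := by
  intro n
  induction n with
  | zero => intros; trivial
  | succ n ih =>
    intro R _ _ h
    obtain ⟨x, hx, _, hr, h'⟩ := h.cut ∅ Set.finite_empty (by simp) (by simp)
    haveI := h'.loc
    refine ⟨x, hx, hr, ?_⟩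
    have := ih h'
    refine (Dp.congr_semi (Ideal.Quotient.mk (Ideal.span {x})) Ideal.Quotient.mk_surjective n
      (QuotSMulTop x R) _ (Submodule.quotEquivOfEq _ _ (qst_self_le x)).toAddEquiv ?_).2 this
    intro r m
    obtain ⟨m, rfl⟩ := Submodule.Quotient.mk_surjective _ m
    rfl

/-- Action of a square matrix on `X^k`. -/
def mact {R : Type u} [CommRing R] {k : ℕ} (A : Matrix (Fin k) (Fin k) R) (X : Type u)
    [AddCommGroup X] [Module R X] : (Fin k → X) →ₗ[R] (Fin k → X) :=
  LinearMap.pi fun i => ∑ j, A i j • LinearMap.proj j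

section mact
variable {R : Type u} [CommRing R] {k : ℕ} (A B : Matrix (Fin k) (Fin k) R)
  {X Y : Type u} [AddCommGroup X] [Module R X] [AddCommGroup Y] [Module R Y]

theorem mact_apply (v : Fin k → X) (i : Fin k) : mact A X v i = ∑ j, A i j • v j := by
  simp [mact]

theorem mact_mul (v : Fin k → X) : mact (A * B) X v = mact A X (mact B X v) := by
  ext i
  simp only [mact_apply, Matrix.mul_apply, Finset.smul_sum, Finset.sum_smul, smul_smul]
  rw [Finset.sum_comm]

theorem mact_one (v : Fin k → X) : mact (1 : Matrix (Fin k) (Fin k) R) X v = v := by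
  ext i
  simp [mact_apply, Matrix.one_apply, ite_smul]

theorem mact_zero (v : Fin k → X) : mact (0 : Matrix (Fin k) (Fin k) R) X v = 0 := by
  ext i
  simp [mact_apply]

theorem mact_nat (g : X →ₗ[R] Y) (v : Fin k → X) :
    mact A Y (fun i => g (v i)) = fun i => g (mact A X v i) := by
  ext i
  simp [mact_apply]

theorem mact_nat0 (g : X →ₗ[R] Y) (v : Fin k → X) (h : mact A X v = 0) :
    mact A Y (fun i => g (v i)) = 0 := by
  rw [mact_nat, h]; ext i; simp

/-- Exactness of multiplication by `(A, B)`. -/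
def Ex (A B : Matrix (Fin k) (Fin k) R) (X : Type u) [AddCommGroup X] [Module R X] : Prop :=
  ∀ v : Fin k → X, mact A X v = 0 → ∃ w, v = mact B X w

theorem Ex.pi (h : Ex A B X) (r : ℕ) : Ex A B (Fin r → X) := by
  intro v hv
  have : ∀ j : Fin r, ∃ w, (fun i => v i j) = mact B X w := by
    intro j
    apply h
    exact mact_nat0 A (LinearMap.proj j : (Fin r → X) →ₗ[R] X) v hv
  choose w hw using this
  refine ⟨fun i j => w j i, ?_⟩
  ext i j
  have : v i j = mact B X (w j) i := congrFun (hw j) i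
  rw [this, mact_apply, mact_apply]
  simp

variable {A B}

/-- Passing to the quotient by a regular element. -/
theorem Ex.qst (hBA : B * A = 0) (hA : Ex A B X) (hB : Ex B A X) (x : R) (hx : IsSMulRegular X x) :
    Ex A B (QuotSMulTop x X) := by
  intro v hv
  have : ∃ v' : Fin k → X, v = fun i => Submodule.mkQ _ (v' i) := by
    choose v' hv' using fun i => Submodule.mkQ_surjective _ (v i)
    exact ⟨v', funext fun i => (hv' i).symm⟩
  obtain ⟨v', rfl⟩ := this
  rw [mact_nat] at hv
  have : ∀ i, ∃ w, mact A X v' i = x • w := fun i =>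
    (qst_mk_eq_zero x _).1 (congrFun hv i)
  choose w hw using this
  have hw' : mact A X v' = x • w := funext hw
  have h1 : mact B X w = 0 := by
    have : x • mact B X w = 0 := by
      rw [← map_smul, ← hw', ← mact_mul, hBA, mact_zero]
    ext i
    exact (reg_iff x).1 hx _ (congrFun this i)
  obtain ⟨z, hz⟩ := hB w h1
  obtain ⟨u, hu⟩ := hA (v' - x • z) (by rw [map_sub, map_smul, hw', hz, sub_self])
  refine ⟨fun i => Submodule.mkQ _ (u i), ?_⟩
  rw [mact_nat, ← hu]
  ext i
  simp only [Pi.sub_apply, Pi.smul_apply, map_sub]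
  rw [eq_comm, sub_eq_self]
  exact (qst_mk_eq_zero x _).2 ⟨_, rfl⟩

/-- On finite length modules exactness is symmetric. -/
theorem Ex.symm_of_finite (C : Type u) [AddCommGroup C] [Module R C] [IsArtinian R C]
    [IsNoetherian R C] (hAB : A * B = 0) (hBA : B * A = 0) (h : Ex B A C) : Ex A B C := by
  have hk : LinearMap.ker (mact B C) = LinearMap.range (mact A C) := by
    apply le_antisymm
    · intro v hv
      obtain ⟨w, rfl⟩ := h v hv
      exact ⟨w, rfl⟩
    · rintro _ ⟨w, rfl⟩
      rw [LinearMap.mem_ker, ← mact_mul, hBA, mact_zero]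
  have hlen : ∀ T : (Fin k → C) →ₗ[R] (Fin k → C), Module.length R (Fin k → C) =
      Order.height (LinearMap.ker T) + Order.height (LinearMap.range T) := by
    intro T
    rw [← Module.length_submodule, ← Module.length_submodule]
    refine Module.length_eq_add_of_exact (LinearMap.ker T).subtype T.rangeRestrict
      (Submodule.subtype_injective _) T.surjective_rangeRestrict ?_
    intro y
    constructor
    · intro hy
      exact ⟨⟨y, by simpa using congrArg Subtype.val hy⟩, rfl⟩
    · rintro ⟨y, rfl⟩
      ext1
      exact y.2
  have h1 := (hlen (mact A C)).symm.trans (hlen (mact B C))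
  rw [hk, add_comm] at h1
  have h2 := WithTop.add_left_cancel (Submodule.height_lt_top (LinearMap.range (mact A C))).ne h1
  have hle : LinearMap.range (mact B C) ≤ LinearMap.ker (mact A C) := by
    rintro _ ⟨w, rfl⟩
    rw [LinearMap.mem_ker, ← mact_mul, hAB, mact_zero]
  intro v hv
  rcases hle.eq_or_lt with he | hlt
  · have : v ∈ LinearMap.range (mact B C) := by rw [he]; exact hv
    obtain ⟨w, rfl⟩ := this
    exact ⟨w, rfl⟩
  · exact absurd h2 (Submodule.height_strictMono hlt).ne'

/-- The exactness transfers from `X/F` to `X`. -/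
theorem Ex.transfer (hAB : A * B = 0) (hBA : B * A = 0) {F : Type u} [AddCommGroup F] [Module R F]
    (hFA : Ex A B F) (g : F →ₗ[R] X) (hg : Function.Injective g)
    [IsNoetherian R (X ⧸ LinearMap.range g)] [IsArtinian R (X ⧸ LinearMap.range g)]
    (hX : Ex B A X) : Ex A B X := by
  have lift : ∀ v : Fin k → X ⧸ LinearMap.range g, ∃ v' : Fin k → X,
      v = fun i => Submodule.mkQ _ (v' i) := by
    intro v
    choose v' hv' using fun i => Submodule.mkQ_surjective _ (v i)
    exact ⟨v', funext fun i => (hv' i).symm⟩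
  have ker : ∀ v : Fin k → X, (fun i => Submodule.mkQ (LinearMap.range g) (v i)) = 0 →
      ∃ w : Fin k → F, v = fun i => g (w i) := by
    intro v hv
    have : ∀ i, ∃ w, g w = v i := fun i => by
      have := congrFun hv i
      simpa using this
    choose w hw using this
    exact ⟨w, funext fun i => (hw i).symm⟩
  have inj : ∀ w : Fin k → F, (fun i => g (w i)) = 0 → w = 0 := fun w hw => by
    ext i
    exact hg ((congrFun hw i).trans (map_zero g).symm)
  have hC : Ex B A (X ⧸ LinearMap.range g) := by
    intro c hc
    obtain ⟨v, rfl⟩ := lift c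
    rw [mact_nat] at hc
    obtain ⟨w, hw⟩ := ker _ hc
    have h1 : mact A F w = 0 := by
      apply inj
      rw [← mact_nat, ← hw, ← mact_mul, hAB, mact_zero]
    obtain ⟨u, rfl⟩ := hFA w h1
    obtain ⟨z, hz⟩ := hX (v - fun i => g (u i)) (by
      rw [map_sub, mact_nat, hw, sub_self])
    refine ⟨fun i => Submodule.mkQ _ (z i), ?_⟩
    rw [mact_nat, ← hz]
    ext i
    have h2 : Submodule.mkQ (LinearMap.range g) (g (u i)) = 0 := by simp
    simp only [Pi.sub_apply, map_sub]
    rw [h2, sub_zero]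
  have hC' := hC.symm_of_finite _ hAB hBA
  intro v hv
  obtain ⟨c, hc⟩ := hC' (fun i => Submodule.mkQ _ (v i)) (mact_nat0 A _ v hv)
  obtain ⟨y, rfl⟩ := lift c
  rw [mact_nat] at hc
  obtain ⟨w, hw⟩ := ker (v - mact B X y) (by
    ext i
    have h3 : Submodule.mkQ (LinearMap.range g) (v i) =
      Submodule.mkQ (LinearMap.range g) (mact B X y i) := congrFun hc i
    simp only [Pi.sub_apply, map_sub, h3, sub_self, Pi.zero_apply])
  have h1 : mact A F w = 0 := by
    apply inj
    rw [← mact_nat, ← hw, map_sub, hv, ← mact_mul, hAB, mact_zero, sub_self]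
  obtain ⟨u, rfl⟩ := hFA w h1
  refine ⟨y + fun i => g (u i), ?_⟩
  rw [map_add, mact_nat, ← hw]
  abel

end mact

/-- Almost-isomorphism with a free module of rank `r`, up to `s`. -/
def Rk (R : Type u) [CommRing R] (r : ℕ) (s : R) (M : Type u) [AddCommGroup M] [Module R M] :
    Prop :=
  ∃ (g : (Fin r → R) →ₗ[R] M) (h : M →ₗ[R] (Fin r → R)),
    (∀ v, h (g v) = s • v) ∧ ∀ m, g (h m) = s • m

/-- Rank `r`. -/
def HR (R : Type u) [CommRing R] (r : ℕ) (M : Type u) [AddCommGroup M] [Module R M] : Prop :=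
  ∀ p ∈ minimalPrimes R, ∃ s, s ∉ p ∧ Rk R r s M

theorem HR.glue {R : Type u} [CommRing R] [IsNoetherianRing R] {r : ℕ} {M : Type u}
    [AddCommGroup M] [Module R M] (h : HR R r M) :
    ∃ s, (∀ p ∈ minimalPrimes R, s ∉ p) ∧ Rk R r s M := by
  classical
  have hfin := minimalPrimes.finite_of_isNoetherianRing R
  haveI : Fintype (minimalPrimes R) := hfin.fintype
  have h' : ∀ p : minimalPrimes R, ∃ s, s ∉ p.1 ∧ Rk R r s M := fun p => h p.1 p.2
  choose s hs g h hhg hgh using h'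
  have hy : ∀ p : minimalPrimes R, ∃ y, y ∉ p.1 ∧ ∀ q : minimalPrimes R, q ≠ p → y ∈ q.1 := by
    intro p
    have hn : ¬ ((Finset.univ.erase p).inf (fun q : minimalPrimes R => q.1)) ≤ p.1 := by
      intro hle
      obtain ⟨q, hq, hqp⟩ := (Ideal.IsPrime.inf_le' p.2.1.1).1 hle
      have h1 := p.2.2 q.2.1 hqp
      exact (Finset.mem_erase.1 hq).1 (Subtype.ext (le_antisymm hqp h1))
    obtain ⟨y, hy, hyp⟩ := Set.not_subset.1 hn
    refine ⟨y, hyp, fun q hq => ?_⟩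
    have : (Finset.univ.erase p).inf (fun q : minimalPrimes R => q.1) ≤ q.1 :=
      Finset.inf_le (f := fun q : minimalPrimes R => q.1)
        (Finset.mem_erase.2 ⟨hq, Finset.mem_univ _⟩)
    exact this hy
  choose y hyp hyq using hy
  obtain ⟨N, hN⟩ := IsNoetherianRing.isNilpotent_nilradical R
  have hmul : ∀ p q, p ≠ q → y p ^ N * y q ^ N = 0 := by
    intro p q hpq
    rw [← mul_pow]
    have : y p * y q ∈ nilradical R := by
      rw [nilradical_eq_sInf, Ideal.mem_sInf]
      intro J hJ
      haveI : J.IsPrime := hJ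
      obtain ⟨t, ht, htJ⟩ := Ideal.exists_minimalPrimes_le (I := ⊥) (J := J) bot_le
      apply htJ
      by_cases hpt : (⟨t, ht⟩ : minimalPrimes R) = p
      · exact Ideal.mul_mem_left _ _ (hyq q ⟨t, ht⟩ (hpt ▸ hpq))
      · exact Ideal.mul_mem_right _ _ (hyq p ⟨t, ht⟩ hpt)
    have := Ideal.pow_mem_pow this N
    rwa [hN] at this
  refine ⟨∑ p, (y p ^ N * y p ^ N) * s p, ?_, ∑ p, y p ^ N • g p, ∑ p, y p ^ N • h p, ?_, ?_⟩
  · intro p hp hmem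
    haveI := hp.1.1
    rw [← Finset.add_sum_erase _ _ (Finset.mem_univ (⟨p, hp⟩ : minimalPrimes R))] at hmem
    have h2 : ∑ q ∈ Finset.univ.erase (⟨p, hp⟩ : minimalPrimes R),
        (y q ^ N * y q ^ N) * s q ∈ p := by
      refine Ideal.sum_mem _ fun q hq => ?_
      have := (Finset.mem_erase.1 hq).1
      refine Ideal.mul_mem_right _ _ ?_
      have hyy := hyq q ⟨p, hp⟩ this.symm
      by_cases hN0 : N = 0
      · subst hN0
        have h10 : (1 : R) = 0 := by
          have h11 : (1 : R) ∈ (nilradical R) ^ 0 := by simp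
          rw [hN] at h11
          simpa using h11
        have : (1 : R) ∈ p := by rw [h10]; exact p.zero_mem
        exact absurd this ((Ideal.ne_top_iff_one p).1 hp.1.1.ne_top)
      · exact Ideal.mul_mem_right _ _ (Ideal.pow_mem_of_mem _ hyy _ (Nat.pos_of_ne_zero hN0))
    have h3 := (Ideal.add_mem_iff_left _ h2).1 hmem
    have hnp := hyp ⟨p, hp⟩
    have hpr : p.IsPrime := hp.1.1
    rcases hpr.mem_or_mem h3 with h4 | h4
    · rcases hpr.mem_or_mem h4 with h5 | h5 <;> exact hnp (hpr.mem_of_pow_mem _ h5)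
    · exact hs ⟨p, hp⟩ h4
  · intro v
    simp only [LinearMap.sum_apply, LinearMap.smul_apply, map_sum, map_smul, Finset.sum_smul,
      Finset.smul_sum]
    refine Finset.sum_congr rfl fun p _ => ?_
    rw [Finset.sum_eq_single p]
    · rw [hhg, smul_smul, smul_smul]
    · intro q _ hq
      rw [smul_smul, hmul _ _ hq.symm, zero_smul]
    · simp
  · intro v
    simp only [LinearMap.sum_apply, LinearMap.smul_apply, map_sum, map_smul, Finset.sum_smul,
      Finset.smul_sum]
    refine Finset.sum_congr rfl fun p _ => ?_
    rw [Finset.sum_eq_single p]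
    · rw [hgh, smul_smul, smul_smul]
    · intro q _ hq
      rw [smul_smul, hmul _ _ hq.symm, zero_smul]
    · simp

theorem prime_cases {R : Type u} [CommRing R] [IsNoetherianRing R] [IsLocalRing R]
    (hd : (maximalIdeal R).height ≤ 1) (p : Ideal R) (hp : p.IsPrime) :
    p = maximalIdeal R ∨ p ∈ minimalPrimes R := by
  rcases (IsLocalRing.le_maximalIdeal hp.ne_top).eq_or_lt with h | h
  · exact Or.inl h
  · right
    have h1 := Ideal.height_strict_mono_of_isPrime_of_isPrime h
    have h2 : p.height < 1 := h1.trans_le hd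
    exact Ideal.height_eq_zero_iff.1 (Order.lt_one_iff.1 h2)

theorem pow_le_span {R : Type u} [CommRing R] [IsNoetherianRing R] [IsLocalRing R]
    (hd : (maximalIdeal R).height ≤ 1) (s : R) (hs : ∀ p ∈ minimalPrimes R, s ∉ p) :
    ∃ j, maximalIdeal R ^ j ≤ Ideal.span {s} := by
  apply Ideal.exists_pow_le_of_le_radical_of_fg
  · rw [Ideal.radical_eq_sInf]
    refine le_sInf fun p hp => ?_
    rcases prime_cases hd p hp.2 with h | h
    · exact h.ge
    · exact absurd (hp.1 (Ideal.mem_span_singleton_self s)) (hs p h)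
  · exact IsNoetherian.noetherian _

theorem reg_of_nt {R : Type u} [CommRing R] [IsNoetherianRing R] [IsLocalRing R]
    (hd : (maximalIdeal R).height ≤ 1) (hN : Nt R R) (s : R) (hs : ∀ p ∈ minimalPrimes R, s ∉ p) :
    IsSMulRegular R s := by
  apply reg_of_notMem
  intro p hp
  rcases prime_cases hd p hp.isPrime with h | h
  · exact absurd h.ge (hN.not_le p hp)
  · exact hs p h

theorem artinian_of_ann {R : Type u} [CommRing R] [IsNoetherianRing R] [IsLocalRing R]
    (hd : (maximalIdeal R).height ≤ 1) (s : R) (hs : ∀ p ∈ minimalPrimes R, s ∉ p)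
    (C : Type u) [AddCommGroup C] [Module R C] [Module.Finite R C] (hC : ∀ c : C, s • c = 0) :
    IsArtinian R C := by
  by_cases hu : IsUnit s
  · haveI : Subsingleton C := ⟨fun a b => by
      rw [← sub_eq_zero]
      exact (hu.smul_eq_zero).1 (hC _)⟩
    infer_instance
  · have hm : maximalIdeal R ∈ (Ideal.span {s}).minimalPrimes := by
      refine ⟨⟨inferInstance, ?_⟩, ?_⟩
      · rw [Ideal.span_le, Set.singleton_subset_iff]
        exact (mem_maximalIdeal s).2 hu
      · intro p hp _
        rcases prime_cases hd p hp.1 with h | h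
        · exact h.ge
        · exact absurd (hp.2 (Ideal.mem_span_singleton_self s)) (hs p h)
    haveI := IsLocalRing.quotient_artinian_of_mem_minimalPrimes_of_isLocalRing _ hm
    have ht : Module.IsTorsionBySet R C (Ideal.span {s} : Ideal R) := by
      intro c a
      obtain ⟨b, hb⟩ := Ideal.mem_span_singleton.1 a.2
      change (a : R) • c = 0
      rw [hb, mul_comm, mul_smul, hC, smul_zero]
    letI := ht.module
    haveI : IsScalarTower R (R ⧸ Ideal.span {s}) C := ht.isScalarTower
    haveI : Module.Finite (R ⧸ Ideal.span {s}) C :=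
      Module.Finite.of_restrictScalars_finite R _ C
    exact isArtinian_of_surjective_algebraMap (S := R) (R := R ⧸ Ideal.span {s})
      Ideal.Quotient.mk_surjective

theorem ex_of_rank {R : Type u} [CommRing R] [IsNoetherianRing R] [IsLocalRing R]
    (hd : (maximalIdeal R).height ≤ 1) (hN : Nt R R) {X : Type u} [AddCommGroup X] [Module R X]
    [Module.Finite R X] {r k : ℕ} (hX : HR R r X) {A B : Matrix (Fin k) (Fin k) R}
    (hAB : A * B = 0) (hBA : B * A = 0) (hA : Ex A B R) (hB : Ex B A R)
    (hT : ∀ v : Fin k → X, (∃ j, ∀ a ∈ maximalIdeal R ^ j, ∃ w, a • v = mact A X w) →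
      ∃ w, v = mact A X w) : Ex A B X ∧ Ex B A X := by
  obtain ⟨s, hs, g, h, hhg, hgh⟩ := hX.glue
  have hsr := reg_of_nt hd hN s hs
  have hEB : Ex B A X := by
    intro v hv
    obtain ⟨w, hw⟩ := hB.pi _ _ r _ (mact_nat0 B h v hv)
    obtain ⟨j, hj⟩ := pow_le_span hd s hs
    apply hT
    refine ⟨j, fun a ha => ?_⟩
    obtain ⟨c, rfl⟩ := Ideal.mem_span_singleton.1 (hj ha)
    refine ⟨c • fun i => g (w i), ?_⟩
    rw [map_smul, mact_nat, ← hw, mul_comm, mul_smul]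
    congr 1
    ext i
    simp [hgh]
  refine ⟨?_, hEB⟩
  have hg : Function.Injective g := by
    rw [injective_iff_map_eq_zero]
    intro v hv
    have h1 : s • v = 0 := by rw [← hhg, hv, map_zero]
    ext i
    exact (reg_iff s).1 hsr _ (congrFun h1 i)
  haveI : IsArtinian R (X ⧸ LinearMap.range g) := by
    refine artinian_of_ann hd s hs _ fun c => ?_
    obtain ⟨c, rfl⟩ := Submodule.Quotient.mk_surjective _ c
    rw [← Submodule.Quotient.mk_smul, Submodule.Quotient.mk_eq_zero, ← hgh]
    exact ⟨_, rfl⟩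
  exact Ex.transfer hAB hBA (hA.pi _ _ r) g hg hEB

theorem free_of_pid_quot {Q : Type u} [CommRing Q] [IsDomain Q] [IsNoetherianRing Q] [IsLocalRing Q]
    {k : ℕ} (K : Submodule Q (Fin k → Q)) (x : Q) (hx0 : x ≠ 0) (hxm : x ∈ maximalIdeal Q)
    (hV : RegN 1 (Q ⧸ Ideal.span {x})) (hx : ∀ c, x • c ∈ K → c ∈ K) : Module.Free Q K := by
  haveI := hV.isDomain
  haveI := hV.isPID
  have hreg : IsSMulRegular K x := by
    refine (reg_iff (M := K) x).2 ?_
    intro v hv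
    ext i
    have : x * (v : Fin k → Q) i = 0 := congrFun (congrArg Subtype.val hv) i
    exact (mul_eq_zero.1 this).resolve_left hx0
  haveI : Module.FinitePresentation Q K := Module.finitePresentation_of_finite Q K
  rw [← Module.free_quotSMulTop_iff_free Q K (IsLocalRing.maximalIdeal_le_jacobson _ hxm) hreg]
  haveI : Module.Finite (Q ⧸ Ideal.span {x}) (QuotSMulTop x K) :=
    Module.Finite.of_restrictScalars_finite Q _ _
  rw [Module.free_iff_isTorsionFree]
  refine Module.IsTorsionFree.mk fun a ha => ?_
  have ha0 : a ≠ 0 := ha.ne_zero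
  intro u v huv
  rw [← sub_eq_zero]
  have huv : a • (u - v) = 0 := by
    rw [smul_sub, sub_eq_zero]; exact huv
  generalize u - v = y at huv
  obtain ⟨y, rfl⟩ := Submodule.Quotient.mk_surjective _ y
  obtain ⟨a, rfl⟩ := Ideal.Quotient.mk_surjective a
  have h1 : (Submodule.Quotient.mk (a • y) : QuotSMulTop x K) = 0 := huv
  obtain ⟨w, hw⟩ := (qst_mk_eq_zero x _).1 h1
  have hax : a ∉ Ideal.span {x} := fun h => ha0 (Ideal.Quotient.eq_zero_iff_mem.2 h)
  have hpr : (Ideal.span {x}).IsPrime := (Ideal.Quotient.isDomain_iff_prime _).1 inferInstance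
  have h2 : ∀ i, ∃ c, (y : Fin k → Q) i = x * c := by
    intro i
    have h3 : a * (y : Fin k → Q) i = x * (w : Fin k → Q) i := congrFun (congrArg Subtype.val hw) i
    have h4 : a * (y : Fin k → Q) i ∈ Ideal.span {x} := Ideal.mem_span_singleton.2 ⟨_, h3⟩
    exact Ideal.mem_span_singleton.1 ((hpr.mem_or_mem h4).resolve_left hax)
  choose c hc using h2
  have hc' : (y : Fin k → Q) = x • c := funext hc
  refine (qst_mk_eq_zero x _).2 ⟨⟨c, hx c (hc' ▸ y.2)⟩, ?_⟩
  ext1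
  exact hc'

theorem exists_mf {Q : Type u} [CommRing Q] [IsDomain Q] {k : ℕ} (K : Submodule Q (Fin k → Q))
    [Module.Free Q K] [IsNoetherianRing Q] (f : Q) (hf : f ≠ 0) (hK : ∀ c, f • c ∈ K) :
    ∃ A B : Matrix (Fin k) (Fin k) Q, A * B = f • 1 ∧ B * A = f • 1 ∧
      ∀ c, c ∈ K ↔ ∃ w, c = A.mulVec w := by
  have hle1 : Module.finrank Q K ≤ k := by
    have := LinearMap.finrank_le_finrank_of_injective (f := K.subtype) (Submodule.subtype_injective _)
    simpa using this
  have hle2 : k ≤ Module.finrank Q K := by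
    have := LinearMap.finrank_le_finrank_of_injective
      (f := (LinearMap.codRestrict K (f • LinearMap.id) hK : (Fin k → Q) →ₗ[Q] K)) (by
        rw [injective_iff_map_eq_zero]
        intro c hc
        ext i
        have : f * c i = 0 := congrFun (congrArg Subtype.val hc) i
        exact (mul_eq_zero.1 this).resolve_left hf)
    simpa using this
  let b : Module.Basis (Fin k) Q K := Module.finBasisOfFinrankEq Q K (le_antisymm hle1 hle2)
  let A : Matrix (Fin k) (Fin k) Q := Matrix.of fun i j => (b j : Fin k → Q) i
  have hAw : ∀ w, A.mulVec w = ((∑ j, w j • b j : K) : Fin k → Q) := by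
    intro w
    ext i
    simp [A, Matrix.mulVec, dotProduct, mul_comm]
  have hKA : ∀ c, c ∈ K ↔ ∃ w, c = A.mulVec w := by
    intro c
    constructor
    · intro hc
      refine ⟨fun j => b.repr ⟨c, hc⟩ j, ?_⟩
      rw [hAw, b.sum_repr]
    · rintro ⟨w, rfl⟩
      rw [hAw]
      exact Submodule.coe_mem _
  have hinj : ∀ w, A.mulVec w = 0 → w = 0 := by
    intro w hw
    rw [hAw] at hw
    have h1 : ∑ j, w j • b j = 0 := Subtype.ext hw
    exact funext (Fintype.linearIndependent_iff.1 b.linearIndependent w h1)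
  have h1 : ∀ j : Fin k, ∃ w, f • (Pi.single j 1 : Fin k → Q) = A.mulVec w := fun j =>
    (hKA _).1 (hK _)
  choose w hw using h1
  let B : Matrix (Fin k) (Fin k) Q := Matrix.of fun i j => w j i
  have hAB : A * B = f • 1 := by
    ext i j
    have := congrFun (hw j) i
    simp only [Pi.smul_apply, smul_eq_mul, Matrix.mulVec, dotProduct] at this
    rw [Matrix.mul_apply, Matrix.smul_apply, Matrix.one_apply, smul_eq_mul]
    rw [← show f * (Pi.single j 1 : Fin k → Q) i = f * if i = j then 1 else 0 by
      rw [Pi.single_apply], this]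
    rfl
  refine ⟨A, B, hAB, ?_, hKA⟩
  have h2 : A * (B * A - f • 1) = 0 := by
    rw [mul_sub, ← mul_assoc, hAB]; simp
  rw [← sub_eq_zero]
  ext i j
  have h3 : A.mulVec (fun i => (B * A - f • 1) i j) = 0 := by
    ext i
    exact congrFun (congrFun h2 i) j
  exact congrFun (hinj _ h3) i

/-- Matrix factorization of a one-dimensional module. -/
theorem HypPres.mf {Q R : Type u} [CommRing Q] [CommRing R] {φ : Q →+* R} {f : Q} {m : ℕ}
    (h : HypPres m φ f) (N : Type u) [AddCommGroup N] [Module R N] [Module.Finite R N]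
    (x : Q) (hx0 : x ≠ 0) (hxm : haveI := h.reg.loc; x ∈ maximalIdeal Q)
    (hV : RegN 1 (Q ⧸ Ideal.span {x}))
    (hx : IsSMulRegular N (φ x)) :
    ∃ (k : ℕ) (n : Fin k → N) (A B : Matrix (Fin k) (Fin k) Q),
      Submodule.span R (Set.range n) = ⊤ ∧ A * B = f • 1 ∧ B * A = f • 1 ∧
      ∀ c : Fin k → R, ∑ i, c i • n i = 0 ↔ ∃ w, c = (A.map φ).mulVec w := by
  haveI := h.reg.loc
  haveI := h.reg.noeth
  haveI := h.reg.isDomain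
  obtain ⟨k, n, hn⟩ := Module.Finite.exists_fin (R := R) (M := N)
  let K : Submodule Q (Fin k → Q) :=
    { carrier := {c | ∑ i, φ (c i) • n i = 0}
      add_mem' := by
        intro a b ha hb
        simp only [Set.mem_ofPred_eq] at ha hb ⊢
        simp [add_smul, Finset.sum_add_distrib, ha, hb]
      zero_mem' := by simp
      smul_mem' := by
        intro c a ha
        simp only [Set.mem_ofPred_eq] at ha ⊢
        simp [mul_smul, ← Finset.smul_sum, ha] }
  have hmem : ∀ c, c ∈ K ↔ ∑ i, φ (c i) • n i = 0 := fun c => Iff.rfl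
  haveI : Module.Free Q K := by
    apply free_of_pid_quot K x hx0 hxm hV
    intro c hc
    rw [hmem] at hc ⊢
    apply (reg_iff (φ x)).1 hx
    simpa [mul_smul, ← Finset.smul_sum] using hc
  have hf0 : φ f = 0 := (h.apply_eq_zero f).2 ⟨1, by simp⟩
  obtain ⟨A, B, hAB, hBA, hK⟩ := exists_mf K f h.ne (by
    intro c
    rw [hmem]
    simp [hf0])
  refine ⟨k, n, A, B, hn, hAB, hBA, fun c => ?_⟩
  choose c' hc' using fun i => h.surj (c i)
  have hcc : c = φ ∘ c' := funext fun i => (hc' i).symm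
  constructor
  · intro hc
    obtain ⟨w, hw⟩ := (hK c').1 (by rw [hmem]; simpa [hc'] using hc)
    refine ⟨φ ∘ w, ?_⟩
    rw [hcc, hw]
    ext i
    simp [Matrix.mulVec, dotProduct]
  · rintro ⟨w, rfl⟩
    choose w' hw' using fun i => h.surj (w i)
    have := (hmem _).1 ((hK (A.mulVec w')).2 ⟨_, rfl⟩)
    rw [← this]
    refine Finset.sum_congr rfl fun i _ => ?_
    congr 1
    simp [Matrix.mulVec, dotProduct, hw']

open scoped TensorProduct in
theorem free_of_ker_eq {W : Type u} [CommRing W] [IsLocalRing W] [IsNoetherianRing W] (t : W)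
    (ht : maximalIdeal W = Ideal.span {t}) (e : ℕ) (he : t ^ (e + 1) = 0) (Y : Type u)
    [AddCommGroup Y] [Module W Y] [Module.Finite W Y]
    (h : ∀ y : Y, t • y = 0 → ∃ z, y = t ^ e • z) : Module.Free W Y := by
  haveI : Module.FinitePresentation W Y := Module.finitePresentation_of_finite W Y
  apply Module.free_of_maximalIdeal_rTensor_injective
  rw [injective_iff_map_eq_zero]
  have htm : t ∈ maximalIdeal W := ht ▸ Ideal.mem_span_singleton_self t
  have hel : ∀ u : maximalIdeal W ⊗[W] Y, ∃ y : Y, u = (⟨t, htm⟩ : maximalIdeal W) ⊗ₜ[W] y := by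
    intro u
    induction u using TensorProduct.induction_on with
    | zero => exact ⟨0, by simp⟩
    | tmul a y =>
      obtain ⟨a, ha⟩ := a
      obtain ⟨c, rfl⟩ := Ideal.mem_span_singleton.1 (ht ▸ ha)
      refine ⟨c • y, ?_⟩
      rw [← TensorProduct.smul_tmul]
      congr 1
      ext1
      simp [mul_comm]
    | add u v hu hv =>
      obtain ⟨y, rfl⟩ := hu
      obtain ⟨z, rfl⟩ := hv
      exact ⟨y + z, by rw [TensorProduct.tmul_add]⟩
  intro u hu
  obtain ⟨y, rfl⟩ := hel u
  have h1 : t • y = 0 := by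
    have := congrArg (TensorProduct.lid W Y) hu
    simpa using this
  obtain ⟨z, rfl⟩ := h y h1
  rw [← TensorProduct.smul_tmul]
  have : t ^ e • (⟨t, htm⟩ : maximalIdeal W) = 0 := by
    ext1
    simp [← pow_succ, he]
  rw [this, TensorProduct.zero_tmul]

theorem mact_eq_mulVec {R : Type u} [CommRing R] {k : ℕ} (A : Matrix (Fin k) (Fin k) R)
    (v : Fin k → R) : mact A R v = A.mulVec v := by
  ext i
  simp [mact_apply, Matrix.mulVec, dotProduct]

theorem mact_smul_one {R X : Type u} [CommRing R] [AddCommGroup X] [Module R X] {k : ℕ} (f : R)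
    (v : Fin k → X) : mact (f • (1 : Matrix (Fin k) (Fin k) R)) X v = f • v := by
  ext i
  simp [mact_apply, Matrix.one_apply]

theorem mact_diag {R X : Type u} [CommRing R] [AddCommGroup X] [Module R X] {k : ℕ} (d : Fin k → R)
    (v : Fin k → X) (i : Fin k) : mact (Matrix.diagonal d) X v i = d i • v i := by
  rw [mact_apply, Finset.sum_eq_single i]
  · simp
  · intro j _ hj
    simp [Matrix.diagonal_apply_ne' _ hj]
  · simp

theorem exists_smith {V : Type u} [CommRing V] [IsDomain V] [IsPrincipalIdealRing V] {k : ℕ}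
    (A B : Matrix (Fin k) (Fin k) V) (f : V) (hf : f ≠ 0) (hAB : A * B = f • 1)
    (hBA : B * A = f • 1) :
    ∃ (L L' P P' : Matrix (Fin k) (Fin k) V) (d d' : Fin k → V), L * L' = 1 ∧ L' * L = 1 ∧
      P * P' = 1 ∧ P' * P = 1 ∧ A * P = L * Matrix.diagonal d ∧ B * L = P * Matrix.diagonal d' ∧
      ∀ i, d i * d' i = f := by
  classical
  have hinj : Function.Injective (mact A V) := by
    rw [injective_iff_map_eq_zero]
    intro v hv
    have h1 : f • v = 0 := by rw [← mact_smul_one, ← hBA, mact_mul, hv, map_zero]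
    ext i
    exact (mul_eq_zero.1 (congrFun h1 i)).resolve_left hf
  have hrk : Module.finrank V (LinearMap.range (mact A V)) = Module.finrank V (Fin k → V) :=
    LinearMap.finrank_range_of_inj hinj
  obtain ⟨b, d, b', hb⟩ := Submodule.exists_smith_normal_form_of_rank_eq
    (Pi.basisFun V (Fin k)) hrk
  have hp : ∀ j, ∃ p, mact A V p = b' j := fun j => (b' j).2
  choose p hp using hp
  let L : Matrix (Fin k) (Fin k) V := Matrix.of fun i j => b j i
  let L' : Matrix (Fin k) (Fin k) V := Matrix.of fun i j => b.repr (Pi.single j 1) i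
  let P : Matrix (Fin k) (Fin k) V := Matrix.of fun i j => p j i
  let P' : Matrix (Fin k) (Fin k) V :=
    Matrix.of fun i j => b'.repr ⟨mact A V (Pi.single j 1), _, rfl⟩ i
  have hL : L * L' = 1 := by
    ext i j
    have h1 := congrFun (b.sum_repr (Pi.single j 1)) i
    rw [Finset.sum_apply] at h1
    rw [Matrix.mul_apply, Matrix.one_apply, ← Pi.single_apply, ← h1]
    refine Finset.sum_congr rfl fun l _ => ?_
    simp [L, L', mul_comm]
  have hP : P * P' = 1 := by
    ext i j
    have h1 := congrArg Subtype.val (b'.sum_repr ⟨mact A V (Pi.single j 1), _, rfl⟩)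
    simp only [Submodule.coe_sum, Submodule.coe_smul, ← hp, ← map_smul, ← map_sum] at h1
    have h2 := congrFun (hinj h1) i
    rw [Finset.sum_apply] at h2
    rw [Matrix.mul_apply, Matrix.one_apply, ← Pi.single_apply, ← h2]
    refine Finset.sum_congr rfl fun l _ => ?_
    simp [P, P', mul_comm]
  have hL' := mul_eq_one_comm.1 hL
  have hP' := mul_eq_one_comm.1 hP
  have hAP : A * P = L * Matrix.diagonal d := by
    ext i j
    rw [Matrix.mul_diagonal]
    have h1 := congrFun ((hp j).trans (hb j)) i
    rw [mact_apply] at h1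
    simpa [P, L, Matrix.mul_apply, mul_comm] using h1
  have hD : Matrix.diagonal d * (P' * B * L) = f • 1 := by
    calc Matrix.diagonal d * (P' * B * L) = (L' * L) * Matrix.diagonal d * (P' * B * L) := by
          rw [hL', one_mul]
      _ = L' * (L * Matrix.diagonal d) * (P' * B * L) := by simp only [mul_assoc]
      _ = L' * (A * P) * (P' * B * L) := by rw [hAP]
      _ = L' * A * (P * P') * B * L := by simp only [mul_assoc]
      _ = L' * (A * B) * L := by rw [hP]; simp only [mul_assoc, one_mul]
      _ = f • 1 := by rw [hAB]; simp [hL']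
  have hD' : ∀ i j, d i * (P' * B * L) i j = if i = j then f else 0 := by
    intro i j
    have := congrFun (congrFun hD i) j
    rw [Matrix.diagonal_mul] at this
    rw [this]
    simp [Matrix.one_apply]
  have hd : ∀ i, d i ≠ 0 := by
    intro i h0
    have := hD' i i
    rw [h0, zero_mul, if_pos rfl] at this
    exact hf this.symm
  refine ⟨L, L', P, P', d, fun i => (P' * B * L) i i, hL, hL', hP, hP', hAP, ?_, ?_⟩
  · have : P' * B * L = Matrix.diagonal fun i => (P' * B * L) i i := by
      ext i j
      by_cases hij : i = j
      · subst hij; simp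
      · rw [Matrix.diagonal_apply_ne _ hij]
        have := hD' i j
        rw [if_neg hij] at this
        exact (mul_eq_zero.1 this).resolve_left (hd i)
    rw [← this, mul_assoc, ← mul_assoc, hP, one_mul]
  · intro i
    simpa using hD' i i

theorem map_diagonal' {V W : Type u} [CommRing V] [CommRing W] (ψ : V →+* W) {k : ℕ}
    (d : Fin k → V) : (Matrix.diagonal d).map ψ = Matrix.diagonal fun i => ψ (d i) := by
  rw [Matrix.diagonal_map (map_zero ψ)]

theorem dvr_step {V W : Type u} [CommRing V] [CommRing W] {ψ : V →+* W} {f : V}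
    (h : HypPres 0 ψ f) {k : ℕ} (A B : Matrix (Fin k) (Fin k) V) (hAB : A * B = f • 1)
    (hBA : B * A = f • 1) (Y N : Type u) [AddCommGroup Y] [Module W Y] [Module.Finite W Y]
    [AddCommGroup N] [Module W N] [Module.Finite W N] (n : Fin k → N)
    (hn : Submodule.span W (Set.range n) = ⊤)
    (hrel : ∀ c : Fin k → W, ∑ i, c i • n i = 0 ↔ ∃ w, c = (A.map ψ).mulVec w)
    (hEx : Ex (A.map ψ) (B.map ψ) Y) : Module.Free W Y ∨ Module.Free W N := by
  classical
  haveI := h.reg.loc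
  haveI := h.reg.noeth
  haveI := h.reg.isDomain
  haveI := h.reg.isPID
  haveI := h.loc
  haveI := h.noeth
  haveI : IsDiscreteValuationRing V :=
    { not_a_field' := fun hb => h.reg.not_isField (IsLocalRing.isField_iff_maximalIdeal_eq.2 hb) }
  obtain ⟨t, ht⟩ := IsDiscreteValuationRing.exists_irreducible V
  have htm : maximalIdeal V = Ideal.span {t} := ht.maximalIdeal_eq
  have htW : maximalIdeal W = Ideal.span {ψ t} := by
    rw [← maxIdeal_map_of_surj ψ h.surj, htm, Ideal.map_span, Set.image_singleton]
  have hf0 : ψ f = 0 := (h.apply_eq_zero f).2 ⟨1, by simp⟩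
  obtain ⟨e', u, hfe⟩ := IsDiscreteValuationRing.eq_unit_mul_pow_irreducible h.ne ht
  obtain ⟨e, rfl⟩ : ∃ e, e' = e + 1 := by
    cases e' with
    | zero => exact absurd (by rw [hfe]; simp) h.nonunit
    | succ e => exact ⟨e, rfl⟩
  have hte : ψ t ^ (e + 1) = 0 := by
    have h1 : ψ u * ψ t ^ (e + 1) = 0 := by rw [← map_pow, ← map_mul, ← hfe, hf0]
    exact ((u.isUnit.map ψ).mul_right_eq_zero).1 h1
  obtain ⟨L, L', P, P', d, d', hL, hL', hP, hP', hAP, hBL, hdd⟩ := exists_smith A B f h.ne hAB hBA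
  have key : ∀ i (y : Y), ψ (d i) • y = 0 → ∃ z, y = ψ (d' i) • z := by
    intro i y hy
    have m1 : ∀ {A B C D : Matrix (Fin k) (Fin k) V}, A * B = C * D →
        (A.map ψ) * (B.map ψ) = (C.map ψ) * (D.map ψ) := by
      intro A B C D h
      rw [← Matrix.map_mul, h, Matrix.map_mul]
    have m2 : ∀ {A B : Matrix (Fin k) (Fin k) V}, A * B = 1 →
        (A.map ψ) * (B.map ψ) = 1 := by
      intro A B h
      rw [← Matrix.map_mul, h]
      simp
    obtain ⟨w, hw⟩ := hEx (mact (P.map ψ) Y (Pi.single i y)) (by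
      rw [← mact_mul, m1 hAP, mact_mul]
      convert map_zero (mact (L.map ψ) Y)
      ext j
      rw [map_diagonal', mact_diag]
      by_cases hj : j = i
      · subst hj; simpa using hy
      · simp [hj])
    refine ⟨mact (L'.map ψ) Y w i, ?_⟩
    have h1 : Pi.single i y = mact (Matrix.diagonal fun i => ψ (d' i)) Y (mact (L'.map ψ) Y w) := by
      rw [← mact_one (R := W) (Pi.single i y), ← m2 hP', mact_mul, hw,
        ← mact_one (R := W) w, ← m2 hL, mact_mul (L.map ψ), ← mact_mul (B.map ψ), m1 hBL,
        mact_mul, ← mact_mul (P'.map ψ), m2 hP', mact_one, map_diagonal', ← mact_mul (L.map ψ),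
        m2 hL, mact_one]
    have h2 := congrFun h1 i
    rw [mact_diag] at h2
    simpa using h2
  have hd0 : ∀ i, d i ≠ 0 := fun i h0 => h.ne (by rw [← hdd i, h0, zero_mul])
  have hd0' : ∀ i, d' i ≠ 0 := fun i h0 => h.ne (by rw [← hdd i, h0, mul_zero])
  by_cases hc : ∀ i, IsUnit (d i) ∨ IsUnit (d' i)
  · right
    refine free_of_ker_eq (ψ t) htW e hte N fun y hy => ?_
    have hspan : ∀ y : N, ∃ c : Fin k → W, y = ∑ i, c i • n i := by
      intro y
      have : y ∈ Submodule.span W (Set.range n) := hn ▸ Submodule.mem_top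
      obtain ⟨c, hc⟩ := (Submodule.mem_span_range_iff_exists_fun W).1 this
      exact ⟨c, hc.symm⟩
    obtain ⟨c, rfl⟩ := hspan y
    rw [Finset.smul_sum] at hy
    simp only [smul_smul] at hy
    obtain ⟨w, hw⟩ := (hrel _).1 hy
    choose c' hc' using fun i => h.surj (c i)
    choose w' hw' using fun i => h.surj (w i)
    have h1 : ∀ i, ∃ g, (t • c' - mact A V w') i = f * g := by
      intro i
      rw [← h.apply_eq_zero]
      have := congrFun hw i
      simp only [Matrix.mulVec, dotProduct, Matrix.map_apply] at this
      simp [mact_apply, hc', hw', this]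
    choose g hg using h1
    have h2 : t • c' = mact A V (w' + mact B V g) := by
      rw [map_add, ← mact_mul, hAB, mact_smul_one]
      have : t • c' - mact A V w' = f • g := funext hg
      rw [← this]; abel
    have hA : A = L * Matrix.diagonal d * P' := by
      rw [← hAP, mul_assoc, hP, mul_one]
    have h3 : t • mact L' V c' = mact (Matrix.diagonal d) V (mact P' V (w' + mact B V g)) := by
      rw [← map_smul, h2]
      nth_rewrite 1 [hA]
      rw [← mact_mul, ← mact_mul, ← mul_assoc, ← mul_assoc, hL', one_mul]
    have h4 : ∀ i, ∃ s r, mact L' V c' i = d i * s + t ^ e * r := by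
      intro i
      have h5 := congrFun h3 i
      rw [mact_diag] at h5
      simp only [Pi.smul_apply, smul_eq_mul] at h5
      rcases hc i with hu | hu
      · obtain ⟨v, hv⟩ := hu
        exact ⟨(v⁻¹ : Vˣ) * mact L' V c' i, 0, by rw [← hv]; simp⟩
      · obtain ⟨v, hv⟩ := hu
        have h6 : d i = f * (v⁻¹ : Vˣ) := by
          rw [← hdd i, ← hv, mul_assoc]; simp
        refine ⟨0, u * (v⁻¹ : Vˣ) * mact P' V (w' + mact B V g) i, ?_⟩
        apply mul_left_cancel₀ ht.ne_zero
        rw [h5, h6, hfe]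
        ring
    choose s r hsr using h4
    have h7 : mact L' V c' = mact (Matrix.diagonal d) V s + t ^ e • r := by
      ext i
      rw [Pi.add_apply, mact_diag, hsr]
      rfl
    have h8 : c' = mact A V (mact P V s) + t ^ e • mact L V r := by
      rw [← mact_one (R := V) c', ← hL, mact_mul, h7, map_add, map_smul, ← mact_mul, ← hAP,
        mact_mul]
    refine ⟨∑ i, ψ (mact L V r i) • n i, ?_⟩
    rw [Finset.smul_sum, ← sub_eq_zero, ← Finset.sum_sub_distrib]
    simp only [smul_smul, ← sub_smul]
    refine (hrel _).2 ⟨ψ ∘ mact P V s, ?_⟩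
    ext i
    rw [← hc', h8]
    simp only [Pi.add_apply, Pi.smul_apply, smul_eq_mul, map_add, map_mul, map_pow, add_sub_cancel_right]
    rw [mact_apply A]
    simp [Matrix.mulVec, dotProduct]
  · left
    push Not at hc
    obtain ⟨i, hu, hu'⟩ := hc
    obtain ⟨a, v, hda⟩ := IsDiscreteValuationRing.eq_unit_mul_pow_irreducible (hd0 i) ht
    obtain ⟨b, v', hdb⟩ := IsDiscreteValuationRing.eq_unit_mul_pow_irreducible (hd0' i) ht
    obtain ⟨a, rfl⟩ : ∃ e, a = e + 1 := by
      cases a with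
      | zero => exact absurd (by rw [hda]; simp) hu
      | succ e => exact ⟨e, rfl⟩
    obtain ⟨b, rfl⟩ : ∃ e, b = e + 1 := by
      cases b with
      | zero => exact absurd (by rw [hdb]; simp) hu'
      | succ e => exact ⟨e, rfl⟩
    have hte' : ψ t ^ ((a + b + 1) + 1) = 0 := by
      have h1 : ψ (v * v' : Vˣ) * ψ t ^ (a + b + 1 + 1) = 0 := by
        rw [← map_pow, ← map_mul, ← hf0, ← hdd i, hda, hdb]
        congr 1
        push_cast
        ring
      exact (((v * v').isUnit.map ψ).mul_right_eq_zero).1 h1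
    have key' : ∀ y : Y, ψ t ^ (a + 1) • y = 0 → ∃ z, y = ψ t ^ (b + 1) • z := by
      intro y hy
      obtain ⟨z, hz⟩ := key i y (by rw [hda, map_mul, map_pow, mul_smul, hy, smul_zero])
      refine ⟨ψ v' • z, ?_⟩
      rw [hz, hdb, map_mul, map_pow, mul_comm, mul_smul]
    refine free_of_ker_eq (ψ t) htW (a + b + 1) hte' Y fun y hy => ?_
    have hj : ∀ j ≤ a, ∃ z, y = ψ t ^ j • z := by
      intro j
      induction j with
      | zero => exact fun _ => ⟨y, by simp⟩
      | succ j ih =>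
        intro hja
        obtain ⟨z, hz⟩ := ih (by omega)
        obtain ⟨w, rfl⟩ := key' z (by
          rw [hz, smul_smul, ← pow_succ'] at hy
          obtain ⟨c, hc⟩ := Nat.exists_eq_add_of_le (show j + 1 ≤ a + 1 by omega)
          rw [hc, add_comm (j+1) c, pow_add, mul_smul, hy, smul_zero])
        refine ⟨ψ t ^ b • w, ?_⟩
        rw [hz, smul_smul, smul_smul, ← pow_add, ← pow_add]
        congr 2
        omega
    obtain ⟨z, hz⟩ := hj a le_rfl
    obtain ⟨w, rfl⟩ := key' z (by rw [pow_succ', mul_smul, ← hz, hy])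
    refine ⟨w, ?_⟩
    rw [hz, smul_smul, ← pow_add]
    rfl

theorem Nt.pow {R M : Type u} [CommRing R] [IsLocalRing R] [AddCommGroup M] [Module R M]
    (h : Nt R M) (j : ℕ) : ∀ v : M, (∀ a ∈ maximalIdeal R ^ j, a • v = 0) → v = 0 := by
  induction j with
  | zero => intro v hv; simpa using hv 1 (by simp)
  | succ j ih =>
    intro v hv
    apply ih
    intro a ha
    apply h
    intro b hb
    rw [smul_smul]
    exact hv _ (by rw [pow_succ']; exact Ideal.mul_mem_mul hb ha)

theorem HypPres.ex {Q R : Type u} [CommRing Q] [CommRing R] {φ : Q →+* R} {f : Q} {m : ℕ}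
    (h : HypPres m φ f) {k : ℕ} {A B : Matrix (Fin k) (Fin k) Q} (hAB : A * B = f • 1)
    (hBA : B * A = f • 1) : Ex (A.map φ) (B.map φ) R := by
  haveI := h.reg.isDomain
  intro v hv
  choose v' hv' using fun i => h.surj (v i)
  have h1 : ∀ i, ∃ c, mact A Q v' i = f * c := by
    intro i
    rw [← h.apply_eq_zero]
    have := congrFun hv i
    rw [mact_apply] at this
    simpa [mact_apply, hv'] using this
  choose c hc using h1
  have h2 : mact A Q v' = f • c := funext hc
  have h3 : f • (v' - mact B Q c) = 0 := by
    rw [← mact_smul_one, ← hBA, mact_mul, map_sub, h2, ← mact_mul A B, hAB, mact_smul_one, sub_self,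
      map_zero]
  have h4 : v' = mact B Q c := by
    rw [← sub_eq_zero]
    ext i
    exact (mul_eq_zero.1 (congrFun h3 i)).resolve_left h.ne
  refine ⟨φ ∘ c, ?_⟩
  ext i
  rw [← hv', h4, mact_apply, mact_apply]
  simp

open scoped TensorProduct in
theorem tensor_ker {R X N : Type u} [CommRing R] [AddCommGroup X] [Module R X] [AddCommGroup N]
    [Module R N] {k : ℕ} (n : Fin k → N) (A : Matrix (Fin k) (Fin k) R)
    (hn : Submodule.span R (Set.range n) = ⊤)
    (hrel : ∀ c : Fin k → R, ∑ i, c i • n i = 0 ↔ ∃ w, c = A.mulVec w) (v : Fin k → X) :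
    ∑ i, v i ⊗ₜ[R] n i = 0 ↔ ∃ w, v = mact A X w := by
  constructor
  · intro h
    have h' : ∑ i, n i ⊗ₜ[R] v i = 0 := by
      have := congrArg (TensorProduct.comm R X N) h
      simpa using this
    obtain ⟨κ, a, y, h1, h2⟩ := TensorProduct.vanishesTrivially_of_sum_tmul_eq_zero R hn h'
    choose w hw using fun j => (hrel (fun i => a i j)).1 (h2 j)
    refine ⟨fun i => ∑ l, w l i • y l, ?_⟩
    ext i
    rw [h1, mact_apply]
    simp only [Finset.smul_sum]
    rw [Finset.sum_comm]
    refine Finset.sum_congr rfl fun l _ => ?_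
    have h3 : a i l = A.mulVec (w l) i := congrFun (hw l) i
    rw [h3, Matrix.mulVec, dotProduct, Finset.sum_smul]
    simp only [smul_smul]
  · rintro ⟨w, rfl⟩
    simp only [mact_apply, TensorProduct.sum_tmul]
    rw [Finset.sum_comm]
    refine Finset.sum_eq_zero fun j _ => ?_
    simp only [TensorProduct.smul_tmul, ← TensorProduct.tmul_sum]
    rw [(hrel _).2 ⟨Pi.single j 1, ?_⟩, TensorProduct.tmul_zero]
    ext i
    simp

open scoped TensorProduct in
theorem one_dim {R : Type u} [CommRing R] [IsLocalRing R] (hR : IsHyp 1 R) (X N : Type u)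
    [AddCommGroup X] [Module R X] [Module.Finite R X] [AddCommGroup N] [Module R N]
    [Module.Finite R N] {r : ℕ} (hX : HR R r X) (hNX : Nt R X) (hNN : Nt R N)
    (hNT : Nt R (X ⊗[R] N)) : Module.Free R X ∨ Module.Free R N := by
  haveI := hR.noeth
  have hNR : Nt R R := hR.dp.nt
  have hht : (maximalIdeal R).height ≤ 1 := by rw [hR.height]; simp
  obtain ⟨Q, _, φ, f, h⟩ := hR
  haveI := h.reg.isDomain
  obtain ⟨x, ⟨hxm, hx2⟩, hxR, hxS, hxr, ψ, hψ, hψφ⟩ := h.cut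
    (associatedPrimes R X ∪ associatedPrimes R N)
    ((associatedPrimes.finite R X).union (associatedPrimes.finite R N))
    (by rintro p (hp | hp) <;> exact hp.isPrime)
    (by
      rintro p (hp | hp)
      · exact hNX.not_le p hp
      · exact hNN.not_le p hp)
  have hxX : IsSMulRegular X (φ x) := reg_of_notMem _ fun p hp => hxS p (Or.inl hp)
  have hxN : IsSMulRegular N (φ x) := reg_of_notMem _ fun p hp => hxS p (Or.inr hp)
  have hx0 : x ≠ 0 := fun h0 => hx2 (h0 ▸ Ideal.zero_mem _)
  obtain ⟨k, n, A, B, hn, hAB, hBA, hrel⟩ := h.mf N x hx0 hxm (h.reg.quot x hxm hx2) hxN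
  have hf0 : φ f = 0 := (h.apply_eq_zero f).2 ⟨1, by simp⟩
  have hAB0 : A.map φ * B.map φ = 0 := by
    rw [← Matrix.map_mul, hAB]
    ext i j
    simp [hf0]
  have hBA0 : B.map φ * A.map φ = 0 := by
    rw [← Matrix.map_mul, hBA]
    ext i j
    simp [hf0]
  obtain ⟨hE1, hE2⟩ := ex_of_rank hht hNR hX hAB0 hBA0 (h.ex hAB hBA) (h.ex hBA hAB) (by
    rintro v ⟨j, hj⟩
    rw [← tensor_ker n _ hn hrel]
    apply hNT.pow j
    intro a ha
    have := (tensor_ker n _ hn hrel (a • v)).2 (hj a ha)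
    rw [← this, Finset.smul_sum]
    rfl)
  have hEY : Ex (A.map φ) (B.map φ) (QuotSMulTop (φ x) X) := Ex.qst hBA0 hE1 hE2 (φ x) hxX
  let mk := Ideal.Quotient.mk (Ideal.span {x})
  have hmap : ∀ C : Matrix (Fin k) (Fin k) Q, (C.map mk).map ψ =
      (C.map φ).map (Ideal.Quotient.mk (Ideal.span {φ x})) := by
    intro C
    ext i j
    exact hψφ _
  have hmact : ∀ (C : Matrix (Fin k) (Fin k) Q) (v : Fin k → QuotSMulTop (φ x) X),
      mact ((C.map mk).map ψ) (QuotSMulTop (φ x) X) v = mact (C.map φ) (QuotSMulTop (φ x) X) v := by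
    intro C v
    ext i
    rw [hmap, mact_apply, mact_apply]
    rfl
  have hmf : ∀ {C D : Matrix (Fin k) (Fin k) Q}, C * D = f • 1 →
      C.map mk * D.map mk = mk f • 1 := by
    intro C D h
    rw [← Matrix.map_mul, h]
    ext i j
    by_cases hij : i = j
    · subst hij; simp
    · simp [hij]
  haveI : Module.Finite (R ⧸ Ideal.span {φ x}) (QuotSMulTop (φ x) X) :=
    Module.Finite.of_restrictScalars_finite R _ _
  haveI : Module.Finite (R ⧸ Ideal.span {φ x}) (QuotSMulTop (φ x) N) :=
    Module.Finite.of_restrictScalars_finite R _ _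
  have hspan : ∀ y : N, ∃ c : Fin k → R, y = ∑ i, c i • n i := by
    intro y
    have : y ∈ Submodule.span R (Set.range n) := hn ▸ Submodule.mem_top
    obtain ⟨c, hc⟩ := (Submodule.mem_span_range_iff_exists_fun R).1 this
    exact ⟨c, hc.symm⟩
  have hfin := dvr_step hψ (A.map mk) (B.map mk) (hmf hAB) (hmf hBA) (QuotSMulTop (φ x) X)
    (QuotSMulTop (φ x) N) (fun i => Submodule.Quotient.mk (n i)) (by
      rw [eq_top_iff]
      rintro y -
      obtain ⟨y, rfl⟩ := Submodule.Quotient.mk_surjective _ y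
      obtain ⟨c, rfl⟩ := hspan y
      rw [Submodule.mem_span_range_iff_exists_fun]
      refine ⟨fun i => Ideal.Quotient.mk _ (c i), ?_⟩
      rw [← Submodule.mkQ_apply, map_sum]
      rfl) (by
      intro c
      choose c' hc' using fun i => Ideal.Quotient.mk_surjective (c i)
      have h1 : ∑ i, c i • (Submodule.Quotient.mk (n i) : QuotSMulTop (φ x) N) =
          Submodule.Quotient.mk (∑ i, c' i • n i) := by
        rw [← Submodule.mkQ_apply, map_sum]
        refine Finset.sum_congr rfl fun i _ => ?_
        rw [← hc']
        rfl
      rw [h1, qst_mk_eq_zero]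
      constructor
      · rintro ⟨w, hw⟩
        obtain ⟨b, rfl⟩ := hspan w
        rw [Finset.smul_sum, ← sub_eq_zero, ← Finset.sum_sub_distrib] at hw
        simp only [smul_smul, ← sub_smul] at hw
        obtain ⟨w, hw⟩ := (hrel _).1 hw
        refine ⟨fun i => Ideal.Quotient.mk _ (w i), ?_⟩
        ext i
        rw [hmap, ← hc']
        have h2 : c' i = ((A.map φ).mulVec w) i + φ x * b i := by
          rw [← hw]; ring
        rw [h2, map_add, map_mul, Ideal.Quotient.mk_singleton_self, zero_mul, add_zero]
        simp [Matrix.mulVec, dotProduct]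
      · rintro ⟨w, hw⟩
        choose w' hw' using fun i => Ideal.Quotient.mk_surjective (w i)
        have h2 : ∀ i, ∃ b, c' i - (A.map φ).mulVec w' i = φ x * b := by
          intro i
          have h3 := congrFun hw i
          rw [hmap, ← hc'] at h3
          have h4 : Ideal.Quotient.mk (Ideal.span {φ x}) (c' i - (A.map φ).mulVec w' i) = 0 := by
            rw [map_sub, h3, sub_eq_zero]
            simp [Matrix.mulVec, dotProduct, hw']
          exact Ideal.mem_span_singleton.1 (Ideal.Quotient.eq_zero_iff_mem.1 h4)
        choose b hb using h2
        refine ⟨∑ i, b i • n i, ?_⟩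
        rw [Finset.smul_sum, ← sub_eq_zero, ← Finset.sum_sub_distrib]
        simp only [smul_smul, ← sub_smul]
        refine (hrel _).2 ⟨w', ?_⟩
        ext i
        rw [← hb]; ring) (by
      intro v hv
      rw [hmact] at hv
      obtain ⟨w, hw⟩ := hEY v hv
      exact ⟨w, by rw [hmact]; exact hw⟩)
  haveI : Module.FinitePresentation R X := Module.finitePresentation_of_finite R X
  haveI : Module.FinitePresentation R N := Module.finitePresentation_of_finite R N
  rcases hfin with hf | hf
  · left
    exact (Module.free_quotSMulTop_iff_free R X (IsLocalRing.maximalIdeal_le_jacobson _ hxR) hxX).1 hf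
  · right
    exact (Module.free_quotSMulTop_iff_free R N (IsLocalRing.maximalIdeal_le_jacobson _ hxR) hxN).1 hf

open scoped TensorProduct in
theorem subsingleton_of_tensor {R : Type u} [CommRing R] [IsLocalRing R] (H N : Type u)
    [AddCommGroup H] [Module R H] [Module.Finite R H] [AddCommGroup N] [Module R N]
    [Module.Finite R N] [Nontrivial N] (h : Subsingleton (H ⊗[R] N)) : Subsingleton H := by
  obtain ⟨C, hC, -⟩ := (eq_top_or_exists_le_coatom (⊥ : Submodule R N)).resolve_left bot_ne_top
  haveI : IsSimpleModule R (N ⧸ C) := isSimpleModule_iff_isCoatom.2 hC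
  obtain ⟨I, hI, ⟨e⟩⟩ := isSimpleModule_iff_quot_maximal.1 this
  have hIm : I = maximalIdeal R := IsLocalRing.eq_maximalIdeal hI
  subst hIm
  have hsurj : Function.Surjective (LinearMap.lTensor H (e.toLinearMap ∘ₗ C.mkQ)) :=
    LinearMap.lTensor_surjective H (g := e.toLinearMap ∘ₗ C.mkQ)
      (e.surjective.comp C.mkQ_surjective)
  have h1 : Subsingleton (H ⊗[R] (R ⧸ maximalIdeal R)) := hsurj.subsingleton
  have h2 : Subsingleton (ResidueField R ⊗[R] H) :=
    (TensorProduct.comm R H (R ⧸ maximalIdeal R)).surjective.subsingleton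
  exact IsLocalRing.subsingleton_tensorProduct.1 h2

theorem exists_tors (R : Type u) [CommRing R] [IsLocalRing R] (M : Type u) [AddCommGroup M]
    [Module R M] [IsNoetherian R M] :
    ∃ (j : ℕ) (H : Submodule R M), (∀ v ∈ H, ∀ a ∈ maximalIdeal R ^ j, a • v = 0) ∧
      Nt R (M ⧸ H) := by
  let T : ℕ →o Submodule R M :=
    { toFun := fun j => Submodule.torsionBySet R M ((maximalIdeal R ^ j : Ideal R) : Set R)
      monotone' := by
        intro i j hij v hv
        rw [Submodule.mem_torsionBySet_iff] at hv ⊢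
        exact fun a => hv ⟨a.1, Ideal.pow_le_pow_right hij a.2⟩ }
  have hT : ∀ j v, v ∈ T j ↔ ∀ a ∈ maximalIdeal R ^ j, a • v = 0 := by
    intro j v
    change v ∈ Submodule.torsionBySet R M ((maximalIdeal R ^ j : Ideal R) : Set R) ↔ _
    rw [Submodule.mem_torsionBySet_iff]
    exact ⟨fun h a ha => h ⟨a, ha⟩, fun h a => h a.1 a.2⟩
  obtain ⟨j, hj⟩ := monotone_stabilizes_iff_noetherian.2 ‹IsNoetherian R M› T
  refine ⟨j, T j, fun v hv => (hT j v).1 hv, ?_⟩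
  intro v hv
  obtain ⟨v, rfl⟩ := Submodule.Quotient.mk_surjective _ v
  rw [Submodule.Quotient.mk_eq_zero, hj (j+1) (Nat.le_succ j), hT]
  intro a ha
  rw [pow_succ] at ha
  refine Submodule.mul_induction_on ha ?_ ?_
  · intro b hb c hc
    have h1 := hv c hc
    rw [← Submodule.Quotient.mk_smul, Submodule.Quotient.mk_eq_zero] at h1
    rw [mul_smul]
    exact (hT _ _).1 h1 b hb
  · intro x y hx hy
    rw [add_smul, hx, hy, add_zero]

open scoped TensorProduct in
theorem tors_zero {R : Type u} [CommRing R] [IsLocalRing R] {M N : Type u} [AddCommGroup M]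
    [Module R M] [AddCommGroup N] [Module R N] (hT : Nt R (M ⊗[R] N)) {j : ℕ} {H : Submodule R M}
    (hH : ∀ v ∈ H, ∀ a ∈ maximalIdeal R ^ j, a • v = 0) (y : H ⊗[R] N) :
    LinearMap.rTensor N H.subtype y = 0 := by
  apply hT.pow j
  intro a ha
  rw [← map_smul]
  convert map_zero (LinearMap.rTensor N H.subtype)
  induction y using TensorProduct.induction_on with
  | zero => simp
  | tmul v n =>
    rw [TensorProduct.smul_tmul']
    have : a • v = 0 := by ext1; exact hH v v.2 a ha
    rw [this, TensorProduct.zero_tmul]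
  | add x y hx hy => rw [smul_add, hx, hy, add_zero]

open scoped TensorProduct in
theorem tors_equiv {R : Type u} [CommRing R] [IsLocalRing R] {M N : Type u} [AddCommGroup M]
    [Module R M] [AddCommGroup N] [Module R N] (hT : Nt R (M ⊗[R] N)) {j : ℕ} {H : Submodule R M}
    (hH : ∀ v ∈ H, ∀ a ∈ maximalIdeal R ^ j, a • v = 0) :
    Nonempty ((M ⊗[R] N) ≃ₗ[R] ((M ⧸ H) ⊗[R] N)) := by
  refine ⟨LinearEquiv.ofBijective (LinearMap.rTensor N H.mkQ) ⟨?_, ?_⟩⟩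
  · rw [injective_iff_map_eq_zero]
    intro x hx
    obtain ⟨y, rfl⟩ := (rTensor_exact N (LinearMap.exact_subtype_mkQ H) H.mkQ_surjective x).1 hx
    exact tors_zero hT hH y
  · exact LinearMap.rTensor_surjective N H.mkQ_surjective

open scoped TensorProduct in
theorem tors_free {R : Type u} [CommRing R] [IsLocalRing R] [IsNoetherianRing R] {M N : Type u}
    [AddCommGroup M]
    [Module R M] [AddCommGroup N] [Module R N] [Module.Finite R M] [Module.Finite R N]
    [Nontrivial N] (hT : Nt R (M ⊗[R] N)) {j : ℕ} {H : Submodule R M}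
    (hH : ∀ v ∈ H, ∀ a ∈ maximalIdeal R ^ j, a • v = 0) (hF : Module.Free R (M ⧸ H)) :
    Module.Free R M := by
  obtain ⟨σ, hσ⟩ := Module.projective_lifting_property H.mkQ LinearMap.id H.mkQ_surjective
  have hσ' : ∀ v, H.mkQ (σ v) = v := fun v => LinearMap.congr_fun hσ v
  let ρ : M →ₗ[R] H := LinearMap.codRestrict H (LinearMap.id - σ ∘ₗ H.mkQ) (by
    intro v
    have : H.mkQ (v - σ (H.mkQ v)) = 0 := by rw [map_sub, hσ', sub_self]
    exact (Submodule.Quotient.mk_eq_zero H).1 this)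
  have hρ : ρ ∘ₗ H.subtype = LinearMap.id := by
    ext v
    have : H.mkQ (v : M) = 0 := (Submodule.Quotient.mk_eq_zero H).2 v.2
    have h2 : (ρ v : M) = v - σ (H.mkQ v) := rfl
    simp only [LinearMap.comp_apply, Submodule.subtype_apply, LinearMap.id_apply]
    rw [h2, this, map_zero, sub_zero]
  have hs : Subsingleton (H ⊗[R] N) := by
    refine subsingleton_of_forall_eq 0 fun y => ?_
    have h1 : LinearMap.rTensor N (ρ ∘ₗ H.subtype) y = y := by rw [hρ]; simp
    rw [← h1, LinearMap.rTensor_comp, LinearMap.comp_apply, tors_zero hT hH, map_zero]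
  haveI := subsingleton_of_tensor H N hs
  have hb : H = ⊥ := (Submodule.subsingleton_iff_eq_bot).1 this
  exact Module.Free.of_equiv (Submodule.quotEquivOfEqBot H hb)

theorem tors_HR {R : Type u} [CommRing R] [IsLocalRing R] (hR : Nt R R) {M : Type u}
    [AddCommGroup M] [Module R M] {r : ℕ} (h : HR R r M) {j : ℕ} {H : Submodule R M}
    (hH : ∀ v ∈ H, ∀ a ∈ maximalIdeal R ^ j, a • v = 0) : HR R r (M ⧸ H) := by
  intro p hp
  obtain ⟨s, hs, g, h, hhg, hgh⟩ := h p hp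
  have hker : H ≤ LinearMap.ker h := by
    intro v hv
    rw [LinearMap.mem_ker]
    ext i
    apply hR.pow j
    intro a ha
    have h1 : h (a • v) = 0 := by rw [hH v hv a ha, map_zero]
    rw [map_smul] at h1
    exact congrFun h1 i
  refine ⟨s, hs, H.mkQ ∘ₗ g, H.liftQ h hker, ?_, ?_⟩
  · intro v
    exact hhg v
  · intro v
    obtain ⟨v, rfl⟩ := Submodule.Quotient.mk_surjective _ v
    change H.mkQ (g (h v)) = _
    rw [hgh]
    rfl

theorem Rk_quot {R : Type u} [CommRing R] {M : Type u} [AddCommGroup M] [Module R M] {r : ℕ}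
    {s : R} (x : R) (h : Rk R r s M) :
    Rk (R ⧸ Ideal.span {x}) r (Ideal.Quotient.mk (Ideal.span {x}) s) (QuotSMulTop x M) := by
  obtain ⟨g, h, hhg, hgh⟩ := h
  let mk := Ideal.Quotient.mk (Ideal.span {x})
  have hmk : Function.Surjective mk := Ideal.Quotient.mk_surjective
  let q : M →ₗ[R] QuotSMulTop x M := (x • (⊤ : Submodule R M)).mkQ
  have hq : Function.Surjective q := Submodule.mkQ_surjective _
  have hqs : ∀ (a : R) (w : QuotSMulTop x M), mk a • w = a • w := fun a w => by
    obtain ⟨w, rfl⟩ := hq w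
    rfl
  let gb : (Fin r → R ⧸ Ideal.span {x}) →ₗ[R ⧸ Ideal.span {x}] QuotSMulTop x M :=
    Fintype.linearCombination (R ⧸ Ideal.span {x}) (fun i => q (g (Pi.single i 1)))
  have hgb : ∀ v : Fin r → R, gb (fun i => mk (v i)) = q (g v) := by
    intro v
    simp only [gb, Fintype.linearCombination_apply]
    conv_rhs => rw [pi_eq_sum_univ' v, map_sum, map_sum]
    refine Finset.sum_congr rfl fun i _ => ?_
    rw [hqs, map_smul, map_smul]
  let π : (Fin r → R) →ₗ[R] (Fin r → R ⧸ Ideal.span {x}) :=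
    LinearMap.pi fun i => (Algebra.linearMap R (R ⧸ Ideal.span {x})) ∘ₗ LinearMap.proj i
  have hπ : ∀ v, π v = fun i => mk (v i) := fun v => rfl
  let h0 : QuotSMulTop x M →ₗ[R] (Fin r → R ⧸ Ideal.span {x}) :=
    (x • (⊤ : Submodule R M)).liftQ (π ∘ₗ h) (by
      intro v hv
      obtain ⟨w, -, rfl⟩ := (Submodule.mem_smul_pointwise_iff_exists _ _ _).1 hv
      rw [LinearMap.mem_ker, LinearMap.comp_apply, map_smul, hπ]
      ext i
      change mk (x * h w i) = 0
      exact Ideal.Quotient.eq_zero_iff_mem.2 (Ideal.mul_mem_right _ _ (Ideal.mem_span_singleton_self x)))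
  let hb : QuotSMulTop x M →ₗ[R ⧸ Ideal.span {x}] (Fin r → R ⧸ Ideal.span {x}) :=
    LinearMap.extendScalarsOfSurjective hmk h0
  have hhb : ∀ m, hb (q m) = fun i => mk (h m i) := fun m => rfl
  refine ⟨gb, hb, ?_, ?_⟩
  · intro c
    obtain ⟨v, rfl⟩ : ∃ v : Fin r → R, c = fun i => mk (v i) :=
      ⟨fun i => (hmk (c i)).choose, funext fun i => (hmk (c i)).choose_spec.symm⟩
    rw [hgb, hhb, hhg]
    ext i
    simp [mk]
  · intro m
    obtain ⟨m, rfl⟩ := hq m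
    rw [hhb, hgb, hgh, map_smul]
    exact (hqs s (q m)).symm

open scoped TensorProduct in
theorem dp_quot {R : Type u} [CommRing R] [IsLocalRing R] (x : R) [IsLocalRing (R ⧸ Ideal.span {x})]
    (M N : Type u) [AddCommGroup M] [Module R M] [AddCommGroup N] [Module R N] (n : ℕ)
    (h : Dp R n (QuotSMulTop x (M ⊗[R] N))) :
    Dp (R ⧸ Ideal.span {x}) n (QuotSMulTop x M ⊗[R ⧸ Ideal.span {x}] QuotSMulTop x N) := by
  let eN : QuotSMulTop x N ≃ₗ[R ⧸ Ideal.span {x}] (R ⧸ Ideal.span {x}) ⊗[R] N :=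
    (QuotSMulTop.equivQuotTensor x N).extendScalarsOfSurjective Ideal.Quotient.mk_surjective
  let e1 := QuotSMulTop.quotSMulTopTensorEquivQuotSMulTop x N M
  let e2 := TensorProduct.AlgebraTensorModule.cancelBaseChange R (R ⧸ Ideal.span {x})
    (R ⧸ Ideal.span {x}) (QuotSMulTop x M) N
  let e3 := TensorProduct.congr (LinearEquiv.refl (R ⧸ Ideal.span {x}) (QuotSMulTop x M)) eN
  refine (Dp.congr_semi (Ideal.Quotient.mk (Ideal.span {x})) Ideal.Quotient.mk_surjective n _ _
    ((e1.symm.toAddEquiv.trans e2.symm.toAddEquiv).trans e3.symm.toAddEquiv) ?_).1 h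
  intro a m
  change e3.symm (e2.symm (e1.symm (a • m))) = _ • e3.symm (e2.symm (e1.symm m))
  have h1 : e1.symm (a • m) = Ideal.Quotient.mk (Ideal.span {x}) a • e1.symm m := by
    rw [map_smul e1.symm]
    exact (algebraMap_smul (R ⧸ Ideal.span {x}) a (e1.symm m)).symm
  rw [h1, map_smul e2.symm, map_smul e3.symm]

theorem isLocalRing_quot {R : Type u} [CommRing R] [IsLocalRing R] {x : R}
    (hx : x ∈ maximalIdeal R) : IsLocalRing (R ⧸ Ideal.span {x}) := by
  haveI : Nontrivial (R ⧸ Ideal.span {x}) := by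
    rw [Ideal.Quotient.nontrivial_iff]
    intro h
    rw [Ideal.span_singleton_eq_top] at h
    exact (IsLocalRing.mem_maximalIdeal x).1 hx h
  exact IsLocalRing.of_surjective' (Ideal.Quotient.mk (Ideal.span {x})) Ideal.Quotient.mk_surjective

theorem nontrivial_qst {R : Type u} [CommRing R] [IsLocalRing R] {x : R}
    (hx : x ∈ maximalIdeal R) (M : Type u) [AddCommGroup M] [Module R M] [Module.Finite R M]
    [Nontrivial M] : Nontrivial (QuotSMulTop x M) := by
  rw [QuotSMulTop, Submodule.Quotient.nontrivial_iff]
  intro h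
  have h2 : (⊤ : Submodule R M) ≤ Ideal.span {x} • ⊤ := by
    rw [Submodule.ideal_span_singleton_smul, h]
  have := Submodule.eq_bot_of_le_smul_of_le_jacobson_bot _ _ Module.Finite.fg_top h2 (by
    rw [Ideal.span_singleton_le_iff_mem]
    exact IsLocalRing.maximalIdeal_le_jacobson _ hx)
  exact top_ne_bot this

theorem hr_quot {R : Type u} [CommRing R] [IsLocalRing R] [IsNoetherianRing R] {r : ℕ} {M : Type u}
    [AddCommGroup M] [Module R M] (h : HR R r M) :
    ∃ S : Set (Ideal R), S.Finite ∧ (∀ p ∈ S, p.IsPrime) ∧ (∀ p ∈ S, ¬ maximalIdeal R ≤ p) ∧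
      ∀ x ∈ maximalIdeal R, 1 < (maximalIdeal R).height → (∀ p ∈ S, x ∉ p) →
        HR (R ⧸ Ideal.span {x}) r (QuotSMulTop x M) := by
  let I : Ideal R := Ideal.span {s | Rk R r s M}
  refine ⟨I.minimalPrimes \ {maximalIdeal R},
    (Ideal.finite_minimalPrimes_of_isNoetherianRing R I).subset Set.sdiff_subset,
    fun p hp => hp.1.1.1, ?_, ?_⟩
  · intro p hp hle
    haveI := hp.1.1.1
    exact hp.2 (le_antisymm (IsLocalRing.le_maximalIdeal_of_isPrime p) hle)
  · intro x hx hht hS P hP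
    have hpm : P.comap (Ideal.Quotient.mk (Ideal.span {x})) ∈ (Ideal.span {x}).minimalPrimes := by
      have h1 := Ideal.minimalPrimes_comap_of_surjective
        (f := Ideal.Quotient.mk (Ideal.span {x})) Ideal.Quotient.mk_surjective (I := ⊥) hP
      rwa [← RingHom.ker_eq_comap_bot, Ideal.mk_ker] at h1
    set p := P.comap (Ideal.Quotient.mk (Ideal.span {x})) with hp
    haveI hpp : p.IsPrime := hpm.1.1
    have hh : p.height ≤ 1 := Ideal.height_le_one_of_isPrincipal_of_mem_minimalPrimes _ p hpm
    have hxp : x ∈ p := hpm.1.2 (Ideal.mem_span_singleton_self x)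
    have hnI : ¬ I ≤ p := by
      intro hIp
      obtain ⟨q, hq, hqp⟩ := Ideal.exists_minimalPrimes_le hIp
      haveI hqq : q.IsPrime := hq.1.1
      have hqm : q ≠ maximalIdeal R := by
        rintro rfl
        exact absurd (Ideal.height_mono hqp) (not_le.2 (hh.trans_lt hht))
      have hxq := hS q ⟨hq, hqm⟩
      have hlt : q < p := lt_of_le_of_ne hqp (by rintro h; rw [h] at hxq; exact hxq hxp)
      have h0 : q.height < p.height := Ideal.height_strict_mono_of_isPrime_of_isPrime hlt
      have h00 : q.height = 0 := Order.lt_one_iff.1 (h0.trans_le hh)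
      have hqmin : q ∈ minimalPrimes R := by
        rw [Ideal.height_eq_zero_iff] at h00
        exact h00
      obtain ⟨s, hs, hrk⟩ := h q hqmin
      exact hs (hq.1.2 (Ideal.subset_span hrk))
    rw [Ideal.span_le, Set.not_subset] at hnI
    obtain ⟨s, hs, hsp⟩ := hnI
    exact ⟨Ideal.Quotient.mk _ s, hsp, Rk_quot x hs⟩

open scoped TensorProduct in
theorem hw_core : ∀ (n : ℕ) (R : Type u) [CommRing R] [IsLocalRing R] (_ : IsHyp n R)
    (M N : Type u) [AddCommGroup M] [Module R M] [Module.Finite R M] [AddCommGroup N] [Module R N]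
    [Module.Finite R N] (_ : Nontrivial M) (_ : Nontrivial N) (_ : Dp R n (M ⊗[R] N)) (r : ℕ)
    (_ : HR R r M), Module.Free R M ∨ Module.Free R N := by
  intro n
  induction n with
  | zero =>
    intro R _ _ hR M N _ _ _ _ _ _ _ _ _ r hr
    left
    have hm : maximalIdeal R ∈ minimalPrimes R := by
      have := hR.height
      rw [Nat.cast_zero, Ideal.height_eq_zero_iff] at this
      exact this
    obtain ⟨s, hs, g, h, hhg, hgh⟩ := hr _ hm
    obtain ⟨t, ht⟩ := IsUnit.exists_left_inv (IsLocalRing.notMem_maximalIdeal.1 hs)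
    refine Module.Free.of_equiv (LinearEquiv.ofLinearMap (t • g) h ?_ ?_)
    · ext m
      simp [hgh, ← mul_smul, ht]
    · apply LinearMap.ext
      intro v
      simp only [LinearMap.comp_apply, LinearMap.smul_apply, map_smul, hhg, ← mul_smul, ht, one_smul,
        LinearMap.id_apply]
  | succ n ih =>
    -- the case of modules of positive depth
    have key : ∀ (R : Type u) [CommRing R] [IsLocalRing R] (_ : IsHyp (n+1) R)
        (M N : Type u) [AddCommGroup M] [Module R M] [Module.Finite R M] [AddCommGroup N]
        [Module R N] [Module.Finite R N] (_ : Nontrivial M) (_ : Nontrivial N)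
        (_ : Dp R (n+1) (M ⊗[R] N)) (r : ℕ) (_ : HR R r M) (_ : Nt R M) (_ : Nt R N),
        Module.Free R M ∨ Module.Free R N := by
      intro R _ _ hR M N _ _ _ _ _ _ _ _ hD r hr hM hN
      haveI := hR.noeth
      rcases Nat.eq_zero_or_pos n with rfl | hn
      · exact one_dim hR M N hr hM hN hD.nt
      · obtain ⟨S, hSf, hSp, hSn, hS⟩ := hr_quot hr
        have hT := hD.nt
        obtain ⟨x, hx, hxS, hxR, hx'⟩ := hR.cut
          (S ∪ (associatedPrimes R M ∪ (associatedPrimes R N ∪ associatedPrimes R (M ⊗[R] N))))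
          (hSf.union ((associatedPrimes.finite R M).union ((associatedPrimes.finite R N).union
            (associatedPrimes.finite R (M ⊗[R] N)))))
          (by
            rintro p (h | h | h | h)
            · exact hSp p h
            · exact h.isPrime
            · exact h.isPrime
            · exact h.isPrime)
          (by
            rintro p (h | h | h | h)
            · exact hSn p h
            · exact hM.not_le p h
            · exact hN.not_le p h
            · exact hT.not_le p h)
        have hxM : IsSMulRegular M x := reg_of_notMem x fun p hp => hxS p (Or.inr (Or.inl hp))
        have hxN : IsSMulRegular N x :=
          reg_of_notMem x fun p hp => hxS p (Or.inr (Or.inr (Or.inl hp)))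
        have hxT : IsSMulRegular (M ⊗[R] N) x :=
          reg_of_notMem x fun p hp => hxS p (Or.inr (Or.inr (Or.inr hp)))
        have hrb := hS x hx (by
          rw [hR.height]
          exact_mod_cast Nat.lt_add_of_pos_left hn) fun p hp => hxS p (Or.inl hp)
        haveI := isLocalRing_quot hx
        have hDb := dp_quot x M N n (Dp.exchange n _ hD x hx hxT)
        haveI := Module.Finite.of_restrictScalars_finite R (R ⧸ Ideal.span {x}) (QuotSMulTop x M)
        haveI := Module.Finite.of_restrictScalars_finite R (R ⧸ Ideal.span {x}) (QuotSMulTop x N)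
        haveI := Module.finitePresentation_of_finite R M
        haveI := Module.finitePresentation_of_finite R N
        have hxj := IsLocalRing.maximalIdeal_le_jacobson (⊥ : Ideal R) hx
        rcases ih (R ⧸ Ideal.span {x}) hx' (QuotSMulTop x M) (QuotSMulTop x N)
          (nontrivial_qst hx M) (nontrivial_qst hx N) hDb r hrb with h | h
        · exact Or.inl ((Module.free_quotSMulTop_iff_free R M hxj hxM).1 h)
        · exact Or.inr ((Module.free_quotSMulTop_iff_free R N hxj hxN).1 h)
    intro R _ _ hR M N _ _ _ _ _ _ _ _ hD r hr
    haveI := hR.noeth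
    obtain ⟨j, H, hH, hM'⟩ := exists_tors R M
    obtain ⟨k, K, hK, hN'⟩ := exists_tors R N
    have hT := hD.nt
    obtain ⟨e⟩ := tors_equiv hT hH
    have hD1 : Dp R (n+1) (N ⊗[R] (M ⧸ H)) := 
      (Dp.congr (e.trans (TensorProduct.comm R _ _))).1 hD
    obtain ⟨e'⟩ := tors_equiv hD1.nt hK
    have hD2 : Dp R (n+1) ((M ⧸ H) ⊗[R] (N ⧸ K)) := 
      (Dp.congr (e'.trans (TensorProduct.comm R _ _))).1 hD1
    have hTT : Nontrivial (M ⊗[R] N) := by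
      by_contra h
      rw [not_nontrivial_iff_subsingleton] at h
      exact not_subsingleton M (subsingleton_of_tensor M N h)
    have hnM : Nontrivial (M ⧸ H) := by
      by_contra h
      rw [not_nontrivial_iff_subsingleton] at h
      have : Subsingleton ((M ⧸ H) ⊗[R] N) := inferInstance
      exact not_subsingleton _ e.toEquiv.subsingleton
    have hnN : Nontrivial (N ⧸ K) := by
      by_contra h
      rw [not_nontrivial_iff_subsingleton] at h
      have : Subsingleton ((N ⧸ K) ⊗[R] (M ⧸ H)) := inferInstance
      have h2 : Subsingleton (N ⊗[R] (M ⧸ H)) := e'.toEquiv.subsingleton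
      exact not_subsingleton N (subsingleton_of_tensor N (M ⧸ H) h2)
    rcases key R hR (M ⧸ H) (N ⧸ K) hnM hnN hD2 r (tors_HR hR.dp.nt hr hH) hM' hN' with h | h
    · exact Or.inl (tors_free hT hH h)
    · exact Or.inr (tors_free hD1.nt hK h)

theorem depth_le_dim {R : Type u} [CommRing R] [IsLocalRing R] [IsNoetherianRing R] {X : Type u}
    [AddCommGroup X] [Module R X] [Module.Finite R X] [Nontrivial X] {k : ℕ} (h : Dp R k X) :
    (k : WithBot ℕ∞) ≤ ringKrullDim R := by
  obtain ⟨rs, hl, hm, hw⟩ := (Dp_iff_list k X).1 h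
  have hreg : IsRegular X rs :=
    (IsLocalRing.isRegular_iff_isWeaklyRegular_of_subset_maximalIdeal hm).2 hw
  have h1 := Module.supportDim_add_length_eq_supportDim_of_isRegular rs hreg
  rw [hl] at h1
  have h3 : Nontrivial (X ⧸ Ideal.ofList rs • (⊤ : Submodule R X)) := by
    rw [Submodule.Quotient.nontrivial_iff]
    exact hreg.2.symm
  have h2 : (0 : WithBot ℕ∞) ≤ Module.supportDim R (X ⧸ Ideal.ofList rs • (⊤ : Submodule R X)) := by
    rw [Module.supportDim, Order.krullDim_nonneg_iff]
    exact (Module.nonempty_support_of_nontrivial).to_subtype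
  calc (k : WithBot ℕ∞) ≤ Module.supportDim R (X ⧸ Ideal.ofList rs • (⊤ : Submodule R X)) + k :=
        le_add_of_nonneg_left h2
    _ = _ := h1
    _ ≤ _ := Module.supportDim_le_ringKrullDim R X

open scoped TensorProduct in
theorem Dp.ascend {R S : Type u} [CommRing R] [IsLocalRing R] [CommRing S] [IsLocalRing S]
    [Algebra R S] [Module.Flat R S] (hm : maximalIdeal S = (maximalIdeal R).map (algebraMap R S))
    {k : ℕ} {X : Type u} [AddCommGroup X] [Module R X] (h : Dp R k X) : Dp S k (S ⊗[R] X) := by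
  obtain ⟨rs, hl, hmem, hw⟩ := (Dp_iff_list k X).1 h
  refine (Dp_iff_list k _).2 ⟨rs.map (algebraMap R S), by simpa using hl, ?_,
    hw.of_flat_of_isBaseChange (TensorProduct.isBaseChange R X S)⟩
  intro r hr
  obtain ⟨a, ha, rfl⟩ := List.mem_map.1 hr
  rw [hm]
  exact Ideal.mem_map_of_mem _ (hmem a ha)

open scoped TensorProduct in
theorem Dp.descend {R S : Type u} [CommRing R] [IsLocalRing R] [CommRing S] [IsLocalRing S]
    [IsNoetherianRing R] [IsNoetherianRing S]
    [Algebra R S] [Module.FaithfullyFlat R S]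
    (hm : maximalIdeal S = (maximalIdeal R).map (algebraMap R S)) :
    ∀ (k : ℕ) (X : Type u) [AddCommGroup X] [Module R X] [Module.Finite R X]
      (_ : Dp S k (S ⊗[R] X)), Dp R k X := by
  intro k
  induction k with
  | zero => intros; trivial
  | succ k ih =>
    intro X _ _ _ h
    have hnt : Nt R X := by
      intro v hv
      apply Module.FaithfullyFlat.tensorProduct_mk_injective (A := R) (B := S) X
      rw [map_zero]
      apply h.nt
      intro a ha
      rw [hm] at ha
      refine Submodule.span_induction ?_ ?_ ?_ ?_ ha
      · rintro _ ⟨b, hb, rfl⟩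
        rw [algebraMap_smul, TensorProduct.mk_apply, ← TensorProduct.tmul_smul, hv b hb,
          TensorProduct.tmul_zero]
      · rw [zero_smul]
      · intro x y _ _ hx hy
        rw [add_smul, hx, hy, add_zero]
      · intro c x _ hx
        rw [smul_assoc, hx, smul_zero]
    obtain ⟨x, hx, hx'⟩ := exists_notMem_of_finite' (maximalIdeal R) (associatedPrimes R X)
      (associatedPrimes.finite R X) (fun p hp => hp.isPrime) hnt.not_le
    have hreg : IsSMulRegular X x := reg_of_notMem x hx'
    refine ⟨x, hx, hreg, ih _ ?_⟩
    have hregS : IsSMulRegular (S ⊗[R] X) (algebraMap R S x) :=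
      hreg.of_flat_of_isBaseChange (TensorProduct.isBaseChange R X S)
    exact (Dp.congr (QuotSMulTop.algebraMapTensorEquivTensorQuotSMulTop x X S)).1
      (Dp.exchange k _ h _ (by rw [hm]; exact Ideal.mem_map_of_mem _ hx) hregS)

open scoped TensorProduct in
theorem Rk.ascend {R S : Type u} [CommRing R] [CommRing S] [Algebra R S] {M : Type u}
    [AddCommGroup M] [Module R M] {r : ℕ} {s : R} (h : Rk R r s M) :
    Rk S r (algebraMap R S s) (S ⊗[R] M) := by
  obtain ⟨g, h, hhg, hgh⟩ := h
  let e : S ⊗[R] (Fin r → R) ≃ₗ[S] (Fin r → S) := TensorProduct.piScalarRight R S S (Fin r)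
  have h1 : ∀ w, (h.baseChange S) ((g.baseChange S) w) = algebraMap R S s • w := by
    intro w
    induction w using TensorProduct.induction_on with
    | zero => simp
    | tmul a v => simp [hhg]
    | add x y hx hy => simp only [map_add, smul_add, hx, hy]
  have h2 : ∀ w, (g.baseChange S) ((h.baseChange S) w) = algebraMap R S s • w := by
    intro w
    induction w using TensorProduct.induction_on with
    | zero => simp
    | tmul a v => simp [hgh]
    | add x y hx hy => simp only [map_add, smul_add, hx, hy]
  refine ⟨g.baseChange S ∘ₗ e.symm.toLinearMap, e.toLinearMap ∘ₗ h.baseChange S, ?_, ?_⟩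
  · intro v
    change e (h.baseChange S (g.baseChange S (e.symm v))) = _
    rw [h1, map_smul, LinearEquiv.apply_symm_apply]
  · intro v
    change g.baseChange S (e.symm (e (h.baseChange S v))) = _
    rw [LinearEquiv.symm_apply_apply, h2]

open scoped TensorProduct in
theorem HR.ascend {R S : Type u} [CommRing R] [CommRing S] [Algebra R S] [Module.Flat R S]
    {M : Type u} [AddCommGroup M] [Module R M] {r : ℕ} (h : HR R r M) : HR S r (S ⊗[R] M) := by
  intro P hP
  haveI : P.IsPrime := hP.1.1
  have hmin : P.under R ∈ minimalPrimes R := by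
    refine ⟨⟨inferInstance, bot_le⟩, ?_⟩
    rintro q ⟨hq, -⟩ hle
    obtain ⟨P', hP'P, hP', hlies⟩ := Ideal.exists_ideal_le_liesOver_of_le (p := q)
      (q := P.under R) P hle
    have : P ≤ P' := hP.2 ⟨hP', bot_le⟩ hP'P
    rw [hlies.over]
    exact Ideal.comap_mono this
  obtain ⟨s, hs, hrk⟩ := h _ hmin
  exact ⟨algebraMap R S s, hs, hrk.ascend⟩

theorem HasRank.toHR {R : Type u} [CommRing R] [IsNoetherianRing R] {M : Type u}
    [AddCommGroup M] [Module R M] [Module.Finite R M] (h : HasRank R M) : ∃ r, HR R r M := by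
  obtain ⟨r, h⟩ := h
  refine ⟨r, fun p hp => ?_⟩
  haveI hpp : p.IsPrime := hp.1.1
  obtain ⟨e0⟩ := h p hpp hp
  haveI := Module.finitePresentation_of_finite R M
  let fM := LocalizedModule.mkLinearMap p.primeCompl M
  let fF : (Fin r → R) →ₗ[R] (Fin r → Localization p.primeCompl) :=
    LinearMap.pi fun i => (Algebra.linearMap R (Localization p.primeCompl)) ∘ₗ LinearMap.proj i
  haveI : IsLocalizedModule p.primeCompl fF := inferInstance
  let e : LocalizedModule p.primeCompl M ≃ₗ[R] (Fin r → Localization p.primeCompl) :=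
    e0.restrictScalars R
  obtain ⟨g0, s1, hg⟩ := Module.FinitePresentation.exists_lift_of_isLocalizedModule p.primeCompl fM
    (e.symm.toLinearMap ∘ₗ fF)
  obtain ⟨h0, s2, hh⟩ := Module.FinitePresentation.exists_lift_of_isLocalizedModule p.primeCompl fF
    (e.toLinearMap ∘ₗ fM)
  have hg' : ∀ v, fM (g0 v) = s1 • e.symm (fF v) := fun v => LinearMap.congr_fun hg v
  have hh' : ∀ v, fF (h0 v) = s2 • e (fM v) := fun v => LinearMap.congr_fun hh v
  obtain ⟨t1, ht1⟩ := Module.Finite.exists_smul_of_comp_eq_of_isLocalizedModule p.primeCompl fM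
    (g0 ∘ₗ h0) (((s1 * s2 : p.primeCompl) : R) • LinearMap.id) (by
      apply LinearMap.ext
      intro v
      simp only [LinearMap.comp_apply, LinearMap.smul_apply, LinearMap.id_apply, map_smul]
      rw [hg', hh', Submonoid.smul_def, Submonoid.smul_def, map_smul, LinearEquiv.symm_apply_apply,
        ← mul_smul]
      rfl)
  obtain ⟨t2, ht2⟩ := Module.Finite.exists_smul_of_comp_eq_of_isLocalizedModule p.primeCompl fF
    (h0 ∘ₗ g0) (((s1 * s2 : p.primeCompl) : R) • LinearMap.id) (by
      apply LinearMap.ext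
      intro v
      simp only [LinearMap.comp_apply, LinearMap.smul_apply, LinearMap.id_apply, map_smul]
      rw [hh', hg', Submonoid.smul_def, Submonoid.smul_def, map_smul, LinearEquiv.apply_symm_apply,
        ← mul_smul, mul_comm]
      rfl)
  have ht1' : ∀ v, (t1 : R) • g0 (h0 v) = (t1 : R) • ((s1 * s2 : p.primeCompl) : R) • v :=
    fun v => LinearMap.congr_fun ht1 v
  have ht2' : ∀ v, (t2 : R) • h0 (g0 v) = (t2 : R) • ((s1 * s2 : p.primeCompl) : R) • v :=
    fun v => LinearMap.congr_fun ht2 v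
  refine ⟨((t1 * t2 * (s1 * s2) : p.primeCompl) : R), (t1 * t2 * (s1 * s2) : p.primeCompl).2,
    ((t1 * t2 : p.primeCompl) : R) • g0, h0, ?_, ?_⟩
  · intro v
    rw [LinearMap.smul_apply, map_smul, Submonoid.coe_mul, mul_smul, ht2', ← mul_smul, ← mul_smul]
    simp only [Submonoid.coe_mul, mul_assoc]
  · intro v
    rw [LinearMap.smul_apply, Submonoid.coe_mul, mul_comm (t1 : R), mul_smul, ht1', ← mul_smul,
      ← mul_smul]
    congr 1
    simp only [Submonoid.coe_mul]
    ring

open scoped TensorProduct in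
theorem free_descend {R S : Type u} [CommRing R] [IsLocalRing R] [IsNoetherianRing R] [CommRing S]
    [Algebra R S] [Module.FaithfullyFlat R S] {M : Type u} [AddCommGroup M] [Module R M]
    [Module.Finite R M] (h : Module.Free S (S ⊗[R] M)) : Module.Free R M := by
  haveI : Module.Flat S (S ⊗[R] M) := inferInstance
  haveI : Module.Flat R M := Module.Flat.of_flat_tensorProduct R M S
  haveI := Module.finitePresentation_of_finite R M
  exact Module.free_of_flat_of_isLocalRing

theorem IsHyp.of_pres {Q S : Type u} [CommRing Q] [CommRing S] (hQ : IsRegLocal Q) {f : Q}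
    (hf : f ∈ nonunits Q) (hf0 : f ∈ nonZeroDivisors Q) (e : (Q ⧸ Ideal.span {f}) ≃+* S) :
    ∃ n, IsHyp n S := by
  obtain ⟨n, hn⟩ := RegN.of_isRegLocal hQ
  haveI := hn.loc
  have hne : f ≠ 0 := nonZeroDivisors.ne_zero hf0
  cases n with
  | zero =>
    obtain ⟨s, hc, hs⟩ := hn.gen
    have : s = ∅ := Finset.card_eq_zero.1 (Nat.le_zero.1 hc)
    subst this
    have h1 : f ∈ maximalIdeal Q := (IsLocalRing.mem_maximalIdeal f).2 hf
    rw [← hs] at h1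
    simp at h1
    exact absurd h1 hne
  | succ n =>
    refine ⟨n, Q, _, e.toRingHom.comp (Ideal.Quotient.mk (Ideal.span {f})), f, hn, ?_, ?_, hne, hf⟩
    · exact e.surjective.comp Ideal.Quotient.mk_surjective
    · ext a
      rw [RingHom.mem_ker, RingHom.comp_apply]
      change e _ = 0 ↔ _
      rw [map_eq_zero_iff e e.injective, Ideal.Quotient.eq_zero_iff_mem]

theorem Dp.pred {R : Type u} [CommRing R] [IsLocalRing R] : ∀ (n : ℕ) (X : Type u) [AddCommGroup X]
    [Module R X] (_ : Dp R (n+1) X), Dp R n X := by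
  intro n
  induction n with
  | zero => intros; trivial
  | succ n ih =>
    intro X _ _ h
    obtain ⟨x, hx, hr, hd⟩ := h
    exact ⟨x, hx, hr, ih _ hd⟩

theorem Dp.mono {R : Type u} [CommRing R] [IsLocalRing R] {X : Type u} [AddCommGroup X]
    [Module R X] {m n : ℕ} (hmn : m ≤ n) (h : Dp R n X) : Dp R m X := by
  induction n, hmn using Nat.le_induction with
  | base => exact h
  | succ n _ ih => exact ih (Dp.pred n X h)

theorem Dp.of_subsingleton {R : Type u} [CommRing R] [IsLocalRing R] : ∀ (n : ℕ) (X : Type u)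
    [AddCommGroup X] [Module R X] [Subsingleton X], Dp R n X := by
  intro n
  induction n with
  | zero => intros; trivial
  | succ n ih =>
    intro X _ _ _
    haveI : Subsingleton (QuotSMulTop (0 : R) X) :=
      (Submodule.mkQ_surjective ((0 : R) • (⊤ : Submodule R X))).subsingleton
    exact ⟨0, Ideal.zero_mem _, fun a b _ => Subsingleton.elim a b, ih _⟩

theorem le_rdepth_iff {R : Type u} [CommRing R] [IsLocalRing R] {X : Type u} [AddCommGroup X]
    [Module R X] {k : ℕ} : (k : ℕ∞) ≤ rdepth R X ↔ Dp R k X := by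
  constructor
  · intro h
    cases k with
    | zero => trivial
    | succ k =>
      have h1 : (k : ℕ∞) < rdepth R X := lt_of_lt_of_le (by exact_mod_cast Nat.lt_succ_self k) h
      obtain ⟨b, ⟨rs, hl, hm, hw⟩, hb⟩ := lt_sSup_iff.1 h1
      rw [← hl] at hb
      have hb' : k + 1 ≤ rs.length := by exact_mod_cast hb
      exact Dp.mono hb' ((Dp_iff_list _ X).2
        ⟨rs, rfl, fun r hr => (IsLocalRing.mem_maximalIdeal r).2 (hm r hr), hw⟩)
  · intro h
    obtain ⟨rs, hl, hm, hw⟩ := (Dp_iff_list k X).1 h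
    exact le_sSup ⟨rs, by rw [hl], fun r hr => (IsLocalRing.mem_maximalIdeal r).1 (hm r hr), hw⟩

theorem isMCM_of_dp {R : Type u} [CommRing R] [IsLocalRing R] [IsNoetherianRing R] {X : Type u}
    [AddCommGroup X] [Module R X] [Module.Finite R X] [Nontrivial X] {d : ℕ}
    (hd : ringKrullDim R = d) (h : Dp R d X) : IsMCM R X := by
  have h1 : rdepth R X = d := by
    apply le_antisymm
    · apply sSup_le
      rintro b ⟨rs, hl, hm, hw⟩
      have h2 : Dp R rs.length X := (Dp_iff_list _ X).2
        ⟨rs, rfl, fun r hr => (IsLocalRing.mem_maximalIdeal r).2 (hm r hr), hw⟩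
      have h3 := depth_le_dim h2
      rw [hd] at h3
      rw [← hl]
      exact_mod_cast h3
    · exact le_rdepth_iff.2 h
  rw [IsMCM, h1, hd]
  rfl

theorem dp_of_isMCM {R : Type u} [CommRing R] [IsLocalRing R] {X : Type u}
    [AddCommGroup X] [Module R X] {d : ℕ}
    (hd : ringKrullDim R = d) (h : IsMCM R X) : Dp R d X ∧ Nontrivial X := by
  rw [IsMCM, hd] at h
  have h1 : rdepth R X = d := WithBot.coe_injective h
  refine ⟨le_rdepth_iff.1 h1.ge, ?_⟩
  by_contra hs
  rw [not_nontrivial_iff_subsingleton] at hs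
  have h2 := le_rdepth_iff.2 (Dp.of_subsingleton (R := R) (d+1) X)
  rw [h1] at h2
  have : d + 1 ≤ d := by exact_mod_cast h2
  omega

theorem dp_retract {R : Type u} [CommRing R] [IsLocalRing R] [IsNoetherianRing R] : ∀ (k : ℕ)
    (X Y : Type u) [AddCommGroup X] [Module R X] [Module.Finite R X] [AddCommGroup Y] [Module R Y]
    [Module.Finite R Y] (i : X →ₗ[R] Y) (p : Y →ₗ[R] X) (_ : ∀ v, p (i v) = v) (_ : Dp R k Y),
    Dp R k X := by
  intro k
  induction k with
  | zero => intros; trivial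
  | succ k ih =>
    intro X Y _ _ _ _ _ _ i p hip h
    have hinj : Function.Injective i := Function.LeftInverse.injective hip
    have hY := h.nt
    have hX : Nt R X := by
      intro v hv
      apply hinj
      rw [map_zero]
      apply hY
      intro a ha
      rw [← map_smul, hv a ha, map_zero]
    obtain ⟨x, hx, hx'⟩ := exists_notMem_of_finite' (maximalIdeal R)
      (associatedPrimes R X ∪ associatedPrimes R Y)
      ((associatedPrimes.finite R X).union (associatedPrimes.finite R Y))
      (by rintro q (hq | hq) <;> exact hq.isPrime)
      (by
        rintro q (hq | hq)
        · exact hX.not_le q hq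
        · exact hY.not_le q hq)
    have hrX : IsSMulRegular X x := reg_of_notMem x fun q hq => hx' q (Or.inl hq)
    have hrY : IsSMulRegular Y x := reg_of_notMem x fun q hq => hx' q (Or.inr hq)
    refine ⟨x, hx, hrX, ih _ _ (QuotSMulTop.map x i) (QuotSMulTop.map x p) ?_
      (Dp.exchange k Y h x hx hrY)⟩
    intro v
    obtain ⟨v, rfl⟩ := Submodule.Quotient.mk_surjective _ v
    rw [QuotSMulTop.map_apply_mk, QuotSMulTop.map_apply_mk, hip]

open scoped TensorProduct in
theorem mcm_of_free {R : Type u} [CommRing R] [IsLocalRing R] [IsNoetherianRing R] {M N : Type u}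
    [AddCommGroup M] [Module R M] [Module.Finite R M] [AddCommGroup N] [Module R N]
    [Module.Finite R N] [Nontrivial M] [Nontrivial N] {d : ℕ} (hd : ringKrullDim R = d)
    (hR : Dp R d R) (h : Dp R d (M ⊗[R] N)) (hM : Module.Free R M) : IsMCM R M ∧ IsMCM R N := by
  constructor
  · apply isMCM_of_dp hd
    obtain ⟨rs, hl, hm, hw⟩ := (Dp_iff_list d R).1 hR
    have h1 : IsWeaklyRegular (M ⊗[R] R) rs := hw.isWeaklyRegular_lTensor
    exact (Dp.congr (TensorProduct.rid R M)).1 ((Dp_iff_list d _).2 ⟨rs, hl, hm, h1⟩)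
  · apply isMCM_of_dp hd
    let b := Module.Free.chooseBasis R M
    obtain ⟨i⟩ : Nonempty (Module.Free.ChooseBasisIndex R M) := b.index_nonempty
    refine dp_retract d N (M ⊗[R] N) (TensorProduct.mk R M N (b i))
      ((TensorProduct.lid R N).toLinearMap ∘ₗ LinearMap.rTensor N (b.coord i)) ?_ h
    intro v
    simp

open scoped TensorProduct in
theorem hw_final {R S : Type u} [CommRing R] [IsLocalRing R] [IsNoetherianRing R] [CommRing S]
    [IsLocalRing S] [Algebra R S] [Module.FaithfullyFlat R S]
    (hm : maximalIdeal S = (maximalIdeal R).map (algebraMap R S)) {n : ℕ} (hS : IsHyp n S)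
    (M N : Type u) [AddCommGroup M] [Module R M] [Module.Finite R M]
    [AddCommGroup N] [Module R N] [Module.Finite R N]
    (hrk : HasRank R M) (hMCM : IsMCM R (M ⊗[R] N)) :
    IsMCM R M ∧ IsMCM R N ∧ (Module.Free R M ∨ Module.Free R N) := by
  haveI := hS.noeth
  obtain ⟨d, hd⟩ : ∃ d : ℕ, ringKrullDim R = d := by
    obtain ⟨d, hd⟩ := ENat.ne_top_iff_exists.1 (Ideal.height_ne_top (maximalIdeal.isMaximal R).ne_top)
    exact ⟨d, by rw [← IsLocalRing.maximalIdeal_height_eq_ringKrullDim, ← hd]; rfl⟩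
  obtain ⟨hT, hnt⟩ := dp_of_isMCM hd hMCM
  have hnM : Nontrivial M := by
    by_contra h
    rw [not_nontrivial_iff_subsingleton] at h
    exact not_subsingleton (M ⊗[R] N) inferInstance
  have hnN : Nontrivial N := by
    by_contra h
    rw [not_nontrivial_iff_subsingleton] at h
    exact not_subsingleton (M ⊗[R] N) inferInstance
  have hRn : Dp R n R := Dp.descend (S := S) hm n R
    ((Dp.congr (TensorProduct.AlgebraTensorModule.rid R S S)).2 hS.dp)
  have hTS : Dp S d (S ⊗[R] (M ⊗[R] N)) := Dp.ascend hm hT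
  have hntS : Nontrivial (S ⊗[R] (M ⊗[R] N)) :=
    (Module.FaithfullyFlat.nontrivial_tensorProduct_iff_right R S).2 hnt
  have hdn : d = n := by
    apply le_antisymm
    · have := depth_le_dim hTS
      rw [hS.dim] at this
      exact_mod_cast this
    · have := depth_le_dim hRn
      rw [hd] at this
      exact_mod_cast this
  subst hdn
  obtain ⟨r, hr⟩ := hrk.toHR
  have hcore : Module.Free S (S ⊗[R] M) ∨ Module.Free S (S ⊗[R] N) :=
    hw_core d S hS (S ⊗[R] M) (S ⊗[R] N)
      ((Module.FaithfullyFlat.nontrivial_tensorProduct_iff_right R S).2 hnM)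
      ((Module.FaithfullyFlat.nontrivial_tensorProduct_iff_right R S).2 hnN)
      ((Dp.congr (TensorProduct.AlgebraTensorModule.distribBaseChange R S M N)).1 hTS) r hr.ascend
  rcases hcore with h | h
  · have hF := free_descend h
    obtain ⟨h1, h2⟩ := mcm_of_free hd hRn hT hF
    exact ⟨h1, h2, Or.inl hF⟩
  · have hF := free_descend h
    obtain ⟨h1, h2⟩ := mcm_of_free hd hRn ((Dp.congr (TensorProduct.comm R M N)).1 hT) hF
    exact ⟨h2, h1, Or.inr hF⟩

theorem isMCM_congr {R : Type u} [CommRing R] [IsLocalRing R] [IsNoetherianRing R] {X Y : Type u}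
    [AddCommGroup X] [Module R X] [AddCommGroup Y] [Module R Y] (e : X ≃ₗ[R] Y) (h : IsMCM R X) :
    IsMCM R Y := by
  have : rdepth R X = rdepth R Y := by
    unfold rdepth
    simp only [e.isWeaklyRegular_congr]
  rwa [IsMCM, ← this]

end helpers

/-- Huneke–Wiegand 1994 main theorem: over a hypersurface, if `M` or `N` has
rank and `M ⊗ N` is maximal Cohen-Macaulay, then `M` and `N` are maximal Cohen-Macaulay and
one of them is free. -/
theorem stmt19 (R : Type u) [CommRing R] (hR : IsHypersurfaceRing R)
    (M N : Type u) [AddCommGroup M] [Module R M] [Module.Finite R M]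
    [AddCommGroup N] [Module R N] [Module.Finite R N]
    (hrk : HasRank R M ∨ HasRank R N)
    (hMCM : IsMCM R (TensorProduct R M N)) :
    IsMCM R M ∧ IsMCM R N ∧ (Module.Free R M ∨ Module.Free R N) := by
  obtain ⟨hN, hL, Q, _, hQ, f, hf, hf0, ⟨e⟩⟩ := hR
  have hI : Ideal.span (nonunits R) = IsLocalRing.maximalIdeal R := by
    apply le_antisymm
    · exact Ideal.span_le.2 fun a ha => (IsLocalRing.mem_maximalIdeal a).2 ha
    · exact fun a ha => Ideal.subset_span ((IsLocalRing.mem_maximalIdeal a).1 ha)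
  rw [hI] at e
  obtain ⟨n, hn⟩ := IsHyp.of_pres hQ hf hf0 e
  have : Module.FaithfullyFlat R (AdicCompletion (IsLocalRing.maximalIdeal R) R) :=
    Module.FaithfullyFlat.of_flat_of_isLocalHom
  have hm : IsLocalRing.maximalIdeal (AdicCompletion (IsLocalRing.maximalIdeal R) R) =
    (IsLocalRing.maximalIdeal R).map (algebraMap R (AdicCompletion (IsLocalRing.maximalIdeal R) R)) :=
    AdicCompletion.maximalIdeal_eq_map
  rcases hrk with h | h
  · exact hw_final hm hn M N h hMCM
  · obtain ⟨h1, h2, h3⟩ := hw_final hm hn N M h (isMCM_congr (TensorProduct.comm R M N) hMCM)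
    exact ⟨h2, h1, h3.symm⟩


end
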